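/- Let α > 0, θ∞ > 0, u∞ ∈ ℝ, R₀ > 0, L₀ > 0 and T₀ > 0. There exist a constant δ₀ ∈ (0,1], depending only on α and θ∞, and a constant C₀ > 0, depending on α, θ∞, u∞ and R₀ but independent of L₀, such that the following holds. Let E : [0,T₀] × [0,∞) → ℝ be C¹ with sup( |E| + |∂_x E| ) ≤ δ₀, let F̂ : [0,T₀] × [0,∞) × ℝ³ → ℝ be C¹, and suppose f : [0,T₀] × [0,∞) × ℝ³ → ℝ is C², solves ∂_t f + ξ₁ ∂_x f + E ∂_{ξ₁} f − ((ξ₁ − u∞)/(2θ∞)) E f = F̂, vanishes together with ∇_{x,ξ} f on a neighborhood of the boundary set {(x,ξ) : x = 0, ξ₁ ≥ 0}, is supported in { −L₀ ≤ ξ₁ ≤ R₀ }, and is such that all the integrals below are finite. Then, writing ‖g(t)‖²_{H¹} := ∫₀^∞ ∫_{ℝ³} ( |g|² + |∇_{x,ξ} g|² )(t,x,ξ) dξ dx, for every t ∈ [0,T₀]: ‖e^{αx/2} f(t)‖²_{H¹} + (α/2) Σ_{k=0}^{1} ∫₀^t e^{C₀(t−τ)} ∫₀^∞ ∫_{{ξ₁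 < 0}} |ξ₁| |∇_{x,ξ}^k (e^{αx/2} f)(τ,x,ξ)|² dξ dx dτ ≤ e^{C₀ t} ‖e^{αx/2} f(0)‖²_{H¹} + ∫₀^t e^{C₀(t−τ)} ‖e^{αx/2} F̂(τ)‖²_{H¹} dτ. -/

import Mathlib

open MeasureTheory Real Set Filter

/-- The squared weighted `H¹_{x,ξ}` norm `‖e^{αx/2} g‖²_{H¹}` over the half-space,
with gradient in `(x,ξ)`. -/
noncomputable def wH1 (α : ℝ) (g : ℝ → ℝ × ℝ × ℝ → ℝ) : ENNReal :=
  ∫⁻ x in Set.Ioi (0:ℝ), ∫⁻ ξ : ℝ × ℝ × ℝ, ENNReal.ofReal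
    ((Real.exp (α * x / 2) * g x ξ)^2 +
      ‖fderiv ℝ (fun p : ℝ × (ℝ × ℝ × ℝ) =>
        Real.exp (α * p.1 / 2) * g p.1 p.2) (x, ξ)‖^2)

/-- The weighted dissipation `Σ_{k=0}^{1} ∫∫_{ξ₁<0} |ξ₁| |∇^k_{x,ξ}(e^{αx/2}g)|²`. -/
noncomputable def wDiss (α : ℝ) (g : ℝ → ℝ × ℝ × ℝ → ℝ) : ENNReal :=
  ∫⁻ x in Set.Ioi (0:ℝ), ∫⁻ ξ in {ξ : ℝ × ℝ × ℝ | ξ.1 < 0}, ENNReal.ofReal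
    (|ξ.1| * ((Real.exp (α * x / 2) * g x ξ)^2 +
      ‖fderiv ℝ (fun p : ℝ × (ℝ × ℝ × ℝ) =>
        Real.exp (α * p.1 / 2) * g p.1 p.2) (x, ξ)‖^2))

/-- The dual of the supremum norm on `ℝ × ℝ³` is the `ℓ¹` norm of the coordinates. -/
lemma norm_dual_prod (L : ℝ × (ℝ × ℝ × ℝ) →L[ℝ] ℝ) :
    ‖L‖ = |L (1, 0, 0, 0)| + |L (0, 1, 0, 0)| + |L (0, 0, 1, 0)| + |L (0, 0, 0, 1)| := by
  have key : ∀ a b c d : ℝ, L (a, b, c, d) = a * L (1, 0, 0, 0) + b * L (0, 1, 0, 0)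
      + c * L (0, 0, 1, 0) + d * L (0, 0, 0, 1) := by
    intro a b c d
    have : ((a, b, c, d) : ℝ × (ℝ × ℝ × ℝ)) = a • (1, 0, 0, 0) + b • (0, 1, 0, 0)
        + c • (0, 0, 1, 0) + d • (0, 0, 0, 1) := by simp
    rw [this]
    simp only [map_add, map_smul, smul_eq_mul]
  apply le_antisymm
  · apply L.opNorm_le_bound (by positivity)
    rintro ⟨a, b, c, d⟩
    rw [key, Real.norm_eq_abs]
    simp only [Prod.norm_def, Real.norm_eq_abs]
    set m := max |a| (max |b| (max |c| |d|))
    have ha : |a| ≤ m := le_max_left _ _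
    have hb : |b| ≤ m := le_max_of_le_right (le_max_left _ _)
    have hc : |c| ≤ m := le_max_of_le_right (le_max_of_le_right (le_max_left _ _))
    have hd : |d| ≤ m := le_max_of_le_right (le_max_of_le_right (le_max_right _ _))
    calc |a * L (1, 0, 0, 0) + b * L (0, 1, 0, 0) + c * L (0, 0, 1, 0) + d * L (0, 0, 0, 1)|
        ≤ |a * L (1, 0, 0, 0)| + |b * L (0, 1, 0, 0)| + |c * L (0, 0, 1, 0)|
          + |d * L (0, 0, 0, 1)| := by
            refine (abs_add_le _ _).trans (add_le_add_left ?_ _)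
            refine (abs_add_le _ _).trans (add_le_add_left ?_ _)
            exact abs_add_le _ _
      _ ≤ _ := by
        simp only [abs_mul]
        nlinarith [abs_nonneg (L (1, 0, 0, 0)), abs_nonneg (L (0, 1, 0, 0)),
          abs_nonneg (L (0, 0, 1, 0)), abs_nonneg (L (0, 0, 0, 1))]
  · have hs : ∀ r : ℝ, ∃ s : ℝ, |s| ≤ 1 ∧ s * r = |r| := by
      intro r
      rcases le_total 0 r with h | h
      · exact ⟨1, by simp, by rw [abs_of_nonneg h, one_mul]⟩
      · exact ⟨-1, by simp, by rw [abs_of_nonpos h]; ring⟩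
    obtain ⟨a, ha, ha'⟩ := hs (L (1, 0, 0, 0))
    obtain ⟨b, hb, hb'⟩ := hs (L (0, 1, 0, 0))
    obtain ⟨c, hc, hc'⟩ := hs (L (0, 0, 1, 0))
    obtain ⟨d, hd, hd'⟩ := hs (L (0, 0, 0, 1))
    have h := L.le_opNorm (a, b, c, d)
    rw [key, ha', hb', hc', hd', Real.norm_eq_abs] at h
    have hn : ‖((a, b, c, d) : ℝ × (ℝ × ℝ × ℝ))‖ ≤ 1 := by
      simp [Prod.norm_def, ha, hb, hc, hd]
    calc _ ≤ _ := le_abs_self _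
      _ ≤ _ := h
      _ ≤ ‖L‖ * 1 := by gcongr
      _ = ‖L‖ := mul_one _

/-- Interval integrals of jointly continuous functions commute. -/
lemma intervalIntegral_swap_of_continuous {F : ℝ → ℝ → ℝ} (hF : Continuous F.uncurry)
    (a b c d : ℝ) :
    ∫ x in a..b, ∫ y in c..d, F x y = ∫ y in c..d, ∫ x in a..b, F x y := by
  apply intervalIntegral_intervalIntegral_swap
  exact (hF.continuousOn.integrableOn_compact
    ((isCompact_uIcc (a := a) (b := b)).prod (isCompact_uIcc (a := c) (b := d)))).mono_set
    (Set.prod_mono uIoc_subset_uIcc uIoc_subset_uIcc)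

/-- Integrated form of a transport inequality for the divergence free field `∂ₜ + v ∂ₓ + E ∂ᵥ`
over a box, when the flux through `x = 0` is outgoing and the other fluxes vanish. -/
lemma transport_integral_le {Φ K : ℝ × ℝ × ℝ → ℝ} {E : ℝ → ℝ → ℝ} {T X M : ℝ}
    (hT : 0 ≤ T) (hX : 0 ≤ X) (hM : 0 ≤ M) (hΦ : ContDiff ℝ 1 Φ) (hK : Continuous K)
    (hE : Continuous fun p : ℝ × ℝ => E p.1 p.2)
    (hv : ∀ t x, Φ (t, x, M) = 0 ∧ Φ (t, x, -M) = 0)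
    (hX0 : ∀ t ∈ Icc 0 T, ∀ v ∈ Icc (-M) M, Φ (t, X, v) = 0)
    (hflux : ∀ t ∈ Icc 0 T, ∀ v, v * Φ (t, 0, v) ≤ 0)
    (hVΦ : ∀ t ∈ Ioo 0 T, ∀ x ∈ Ioo 0 X, ∀ v ∈ Ioo (-M) M,
      fderiv ℝ Φ (t, x, v) (1, v, E t x) ≤ K (t, x, v)) :
    (∫ x in 0..X, ∫ v in (-M)..M, Φ (T, x, v)) ≤
      (∫ x in 0..X, ∫ v in (-M)..M, Φ (0, x, v)) +
        ∫ t in 0..T, ∫ x in 0..X, ∫ v in (-M)..M, K (t, x, v) := by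
  have hMM : -M ≤ M := by linarith
  have hd : Differentiable ℝ Φ := hΦ.differentiable one_ne_zero
  have hc : Continuous (fderiv ℝ Φ) := hΦ.continuous_fderiv one_ne_zero
  have e1 : ∀ t x v, HasDerivAt (fun s => Φ (s, x, v)) (fderiv ℝ Φ (t, x, v) (1, 0, 0)) t := by
    intro t x v
    exact (hd (t, x, v)).hasFDerivAt.comp_hasDerivAt t
      ((hasDerivAt_id t).prodMk (hasDerivAt_const t (x, v)))
  have e2 : ∀ t x v, HasDerivAt (fun s => Φ (t, s, v)) (fderiv ℝ Φ (t, x, v) (0, 1, 0)) x := by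
    intro t x v
    exact (hd (t, x, v)).hasFDerivAt.comp_hasDerivAt x
      ((hasDerivAt_const x t).prodMk ((hasDerivAt_id x).prodMk (hasDerivAt_const x v)))
  have e3 : ∀ t x v, HasDerivAt (fun s => Φ (t, x, s)) (fderiv ℝ Φ (t, x, v) (0, 0, 1)) v := by
    intro t x v
    exact (hd (t, x, v)).hasFDerivAt.comp_hasDerivAt v
      ((hasDerivAt_const v t).prodMk ((hasDerivAt_const v x).prodMk (hasDerivAt_id v)))
  have hsplit : ∀ t x v, fderiv ℝ Φ (t, x, v) (1, v, E t x) = fderiv ℝ Φ (t, x, v) (1, 0, 0)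
      + v * fderiv ℝ Φ (t, x, v) (0, 1, 0) + E t x * fderiv ℝ Φ (t, x, v) (0, 0, 1) := by
    intro t x v
    have : ((1, v, E t x) : ℝ × ℝ × ℝ) = (1, 0, 0) + v • (0, 1, 0) + E t x • (0, 0, 1) := by simp
    rw [this]
    simp only [map_add, map_smul, smul_eq_mul]
  have c1 : Continuous fun q : ℝ × ℝ × ℝ => fderiv ℝ Φ q (1, 0, 0) := by fun_prop
  have c2 : Continuous fun q : ℝ × ℝ × ℝ => fderiv ℝ Φ q (0, 1, 0) := by fun_prop
  have c3 : Continuous fun q : ℝ × ℝ × ℝ => fderiv ℝ Φ q (0, 0, 1) := by fun_prop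
  have cE : Continuous fun q : ℝ × ℝ × ℝ => E q.1 q.2.1 :=
    hE.comp (continuous_fst.prodMk (continuous_fst.comp continuous_snd))
  have I1 : (∫ t in 0..T, ∫ x in 0..X, ∫ v in (-M)..M, fderiv ℝ Φ (t, x, v) (1, 0, 0)) =
      (∫ x in 0..X, ∫ v in (-M)..M, Φ (T, x, v)) - ∫ x in 0..X, ∫ v in (-M)..M, Φ (0, x, v) := by
    rw [intervalIntegral_swap_of_continuous
      (F := fun t x => ∫ v in (-M)..M, fderiv ℝ Φ (t, x, v) (1, 0, 0)) (by fun_prop),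
      ← intervalIntegral.integral_sub (Continuous.intervalIntegrable (by fun_prop) _ _)
        (Continuous.intervalIntegrable (by fun_prop) _ _)]
    refine intervalIntegral.integral_congr fun x _ => ?_
    rw [intervalIntegral_swap_of_continuous
      (F := fun t v => fderiv ℝ Φ (t, x, v) (1, 0, 0)) (by fun_prop),
      ← intervalIntegral.integral_sub (Continuous.intervalIntegrable (by fun_prop) _ _)
        (Continuous.intervalIntegrable (by fun_prop) _ _)]
    refine intervalIntegral.integral_congr fun v _ => ?_
    exact intervalIntegral.integral_eq_sub_of_hasDerivAt (fun t _ => e1 t x v)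
      (Continuous.intervalIntegrable (by fun_prop) _ _)
  have I2 : 0 ≤ ∫ t in 0..T, ∫ x in 0..X, ∫ v in (-M)..M,
      v * fderiv ℝ Φ (t, x, v) (0, 1, 0) := by
    refine intervalIntegral.integral_nonneg hT fun t ht => ?_
    rw [intervalIntegral_swap_of_continuous
      (F := fun x v => v * fderiv ℝ Φ (t, x, v) (0, 1, 0)) (by fun_prop)]
    refine intervalIntegral.integral_nonneg hMM fun v hvM => ?_
    rw [intervalIntegral.integral_const_mul,
      intervalIntegral.integral_eq_sub_of_hasDerivAt (fun x _ => e2 t x v)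
      (Continuous.intervalIntegrable (by fun_prop) _ _), hX0 t ht v hvM]
    linarith [hflux t ht v]
  have I3 : (∫ t in 0..T, ∫ x in 0..X, ∫ v in (-M)..M,
      E t x * fderiv ℝ Φ (t, x, v) (0, 0, 1)) = 0 := by
    have : ∀ t x, (∫ v in (-M)..M, E t x * fderiv ℝ Φ (t, x, v) (0, 0, 1)) = 0 := by
      intro t x
      rw [intervalIntegral.integral_const_mul,
        intervalIntegral.integral_eq_sub_of_hasDerivAt (fun v _ => e3 t x v)
        (Continuous.intervalIntegrable (by fun_prop) _ _), (hv t x).1, (hv t x).2]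
      simp
    simp [this]
  have hsum : (∫ t in 0..T, ∫ x in 0..X, ∫ v in (-M)..M, fderiv ℝ Φ (t, x, v) (1, v, E t x)) =
      (∫ t in 0..T, ∫ x in 0..X, ∫ v in (-M)..M, fderiv ℝ Φ (t, x, v) (1, 0, 0)) +
      (∫ t in 0..T, ∫ x in 0..X, ∫ v in (-M)..M, v * fderiv ℝ Φ (t, x, v) (0, 1, 0)) +
      ∫ t in 0..T, ∫ x in 0..X, ∫ v in (-M)..M, E t x * fderiv ℝ Φ (t, x, v) (0, 0, 1) := by
    simp only [hsplit]
    rw [← intervalIntegral.integral_add (Continuous.intervalIntegrable (by fun_prop) _ _)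
      (Continuous.intervalIntegrable (by fun_prop) _ _),
      ← intervalIntegral.integral_add (Continuous.intervalIntegrable (by fun_prop) _ _)
      (Continuous.intervalIntegrable (by fun_prop) _ _)]
    refine intervalIntegral.integral_congr fun t _ => ?_
    rw [← intervalIntegral.integral_add (Continuous.intervalIntegrable (by fun_prop) _ _)
      (Continuous.intervalIntegrable (by fun_prop) _ _),
      ← intervalIntegral.integral_add (Continuous.intervalIntegrable (by fun_prop) _ _)
      (Continuous.intervalIntegrable (by fun_prop) _ _)]
    refine intervalIntegral.integral_congr fun x _ => ?_
    rw [← intervalIntegral.integral_add (Continuous.intervalIntegrable (by fun_prop) _ _)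
      (Continuous.intervalIntegrable (by fun_prop) _ _),
      ← intervalIntegral.integral_add (Continuous.intervalIntegrable (by fun_prop) _ _)
      (Continuous.intervalIntegrable (by fun_prop) _ _)]
  have hle : (∫ t in 0..T, ∫ x in 0..X, ∫ v in (-M)..M, fderiv ℝ Φ (t, x, v) (1, v, E t x)) ≤
      ∫ t in 0..T, ∫ x in 0..X, ∫ v in (-M)..M, K (t, x, v) := by
    have cV : Continuous fun q : ℝ × ℝ × ℝ => fderiv ℝ Φ q (1, q.2.2, E q.1 q.2.1) := by fun_prop
    refine intervalIntegral.integral_mono_on_of_le_Ioo hT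
      (Continuous.intervalIntegrable (by fun_prop) _ _)
      (Continuous.intervalIntegrable (by fun_prop) _ _) fun t ht => ?_
    refine intervalIntegral.integral_mono_on_of_le_Ioo hX
      (Continuous.intervalIntegrable (by fun_prop) _ _)
      (Continuous.intervalIntegrable (by fun_prop) _ _) fun x hx => ?_
    exact intervalIntegral.integral_mono_on_of_le_Ioo hMM
      (Continuous.intervalIntegrable (by fun_prop) _ _)
      (Continuous.intervalIntegrable (by fun_prop) _ _) fun v hv => hVΦ t ht x hx v hv
  linarith

/-- A `C¹` regularization of the absolute value that vanishes at the origin. -/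
noncomputable def smoothAbs (ε y : ℝ) : ℝ := √(y ^ 2 + ε ^ 2) - ε

/-- The derivative of `smoothAbs ε`. -/
noncomputable def smoothSign (ε y : ℝ) : ℝ := y / √(y ^ 2 + ε ^ 2)

lemma sqrt_sq_add_sq_pos {ε : ℝ} (hε : 0 < ε) (y : ℝ) : 0 < √(y ^ 2 + ε ^ 2) :=
  Real.sqrt_pos.2 (by positivity)

lemma contDiff_smoothAbs {ε : ℝ} (hε : 0 < ε) : ContDiff ℝ 1 (smoothAbs ε) :=
  (ContDiff.sqrt (by fun_prop) fun y => by positivity).sub contDiff_const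

lemma hasDerivAt_smoothAbs {ε : ℝ} (hε : 0 < ε) (y : ℝ) :
    HasDerivAt (smoothAbs ε) (smoothSign ε y) y := by
  have h : HasDerivAt (fun y : ℝ => y ^ 2 + ε ^ 2) (2 * y) y := by
    simpa using (hasDerivAt_pow 2 y).add_const (ε ^ 2)
  exact ((h.sqrt (by positivity)).sub_const ε).congr_deriv (mul_div_mul_left _ _ two_ne_zero)

lemma abs_le_sqrt_sq_add_sq (ε y : ℝ) : |y| ≤ √(y ^ 2 + ε ^ 2) :=
  Real.abs_le_sqrt (by nlinarith [sq_nonneg ε])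

lemma sqrt_sq_add_sq_le {ε : ℝ} (hε : 0 < ε) (y : ℝ) : √(y ^ 2 + ε ^ 2) ≤ |y| + ε := by
  rw [Real.sqrt_le_left (by positivity)]
  nlinarith [sq_abs y, mul_nonneg (abs_nonneg y) hε.le]

lemma smoothAbs_zero {ε : ℝ} (hε : 0 < ε) : smoothAbs ε 0 = 0 := by
  simp [smoothAbs, Real.sqrt_sq hε.le]

lemma smoothAbs_nonneg (ε y : ℝ) : 0 ≤ smoothAbs ε y :=
  sub_nonneg.2 (Real.le_sqrt_of_sq_le (by nlinarith [sq_nonneg y]))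

lemma smoothAbs_le {ε : ℝ} (hε : 0 < ε) (y : ℝ) : smoothAbs ε y ≤ |y| :=
  sub_le_iff_le_add.2 (sqrt_sq_add_sq_le hε y)

lemma abs_le_smoothAbs_add (ε y : ℝ) : |y| ≤ smoothAbs ε y + ε := by
  rw [smoothAbs, sub_add_cancel]
  exact abs_le_sqrt_sq_add_sq ε y

lemma abs_smoothSign_le {ε : ℝ} (hε : 0 < ε) (y : ℝ) : |smoothSign ε y| ≤ 1 := by
  rw [smoothSign, abs_div, abs_of_pos (sqrt_sq_add_sq_pos hε y),
    div_le_one (sqrt_sq_add_sq_pos hε y)]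
  exact abs_le_sqrt_sq_add_sq ε y

lemma smoothSign_mul_nonneg (ε y : ℝ) : 0 ≤ smoothSign ε y * y := by
  rw [smoothSign, div_mul_eq_mul_div]
  exact div_nonneg (mul_self_nonneg y) (Real.sqrt_nonneg _)

lemma smoothSign_mul_le {ε : ℝ} (hε : 0 < ε) (y : ℝ) : smoothSign ε y * y ≤ |y| := by
  refine (le_abs_self _).trans ?_
  rw [abs_mul]
  exact mul_le_of_le_one_left (abs_nonneg y) (abs_smoothSign_le hε y)

lemma abs_le_smoothSign_mul_add {ε : ℝ} (hε : 0 < ε) (y : ℝ) :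
    |y| ≤ smoothSign ε y * y + ε := by
  have h := sqrt_sq_add_sq_le hε y
  have hs := sqrt_sq_add_sq_pos hε y
  have h1 := abs_le_sqrt_sq_add_sq ε y
  rw [smoothSign, div_mul_eq_mul_div, ← sub_le_iff_le_add, le_div_iff₀ hs]
  nlinarith [abs_nonneg y, sq_abs y]

/-- Growth of the regularized energy density `p₀² + (∑ smoothAbs ε pᵢ)²` when every component
grows at rate `a`, up to lower order terms `g₀`, `r`. -/
lemma regularized_energy_growth {p₀ a A g₀ Γ ε : ℝ} {p r : Fin 4 → ℝ} (hA : 0 ≤ A)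
    (hε : 0 < ε) (hr : ∑ i, |r i| ≤ A * |p₀| + 2 * ∑ i, |p i| + Γ) :
    2 * p₀ * (a * p₀ + g₀) +
        2 * (∑ i, smoothAbs ε (p i)) * ∑ i, smoothSign ε (p i) * (a * p i + r i) ≤
      (2 * a + A + 5) * (p₀ ^ 2 + (∑ i, |p i|) ^ 2) + (g₀ ^ 2 + Γ ^ 2) +
        ε * (16 * |a| * ∑ i, |p i|) := by
  set N := ∑ i, |p i|
  set S := ∑ i, smoothAbs ε (p i)
  have hS0 : 0 ≤ S := Finset.sum_nonneg fun i _ => smoothAbs_nonneg ε _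
  have hSN : S ≤ N := Finset.sum_le_sum fun i _ => smoothAbs_le hε _
  have hNS : N ≤ S + 4 * ε := by
    calc N ≤ ∑ i, (smoothAbs ε (p i) + ε) :=
          Finset.sum_le_sum fun i _ => abs_le_smoothAbs_add ε _
      _ = S + 4 * ε := by simp [Finset.sum_add_distrib, S]
  have hexp : ∑ i, smoothSign ε (p i) * (a * p i + r i) =
      a * ∑ i, smoothSign ε (p i) * p i + ∑ i, smoothSign ε (p i) * r i := by
    rw [Finset.mul_sum, ← Finset.sum_add_distrib]
    exact Finset.sum_congr rfl fun i _ => by ring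
  rw [hexp]
  set P := ∑ i, smoothSign ε (p i) * p i
  set ρ := ∑ i, smoothSign ε (p i) * r i
  have hP0 : 0 ≤ P := Finset.sum_nonneg fun i _ => smoothSign_mul_nonneg ε _
  have hPN : P ≤ N := Finset.sum_le_sum fun i _ => smoothSign_mul_le hε _
  have hNP : N ≤ P + 4 * ε := by
    calc N ≤ ∑ i, (smoothSign ε (p i) * p i + ε) :=
          Finset.sum_le_sum fun i _ => abs_le_smoothSign_mul_add hε _
      _ = P + 4 * ε := by simp [Finset.sum_add_distrib, P]
  have hρ : ρ ≤ A * |p₀| + 2 * N + Γ := by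
    refine le_trans (Finset.sum_le_sum fun i _ => ?_) hr
    refine (le_abs_self _).trans ?_
    rw [abs_mul]
    exact mul_le_of_le_one_left (abs_nonneg _) (abs_smoothSign_le hε _)
  have hρ' : 0 ≤ A * |p₀| + 2 * N + Γ :=
    (Finset.sum_nonneg fun i _ => abs_nonneg (r i)).trans hr
  have hN0 : 0 ≤ N := hS0.trans hSN
  have h1 : S * ρ ≤ N * (A * |p₀| + 2 * N + Γ) :=
    (mul_le_mul_of_nonneg_left hρ hS0).trans (mul_le_mul_of_nonneg_right hSN hρ')
  have hSP : S * P ≤ N * N := mul_le_mul hSN hPN hP0 hN0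
  have hSP' : N * N - S * P ≤ 8 * ε * N := by nlinarith
  have h2 : a * (S * P) ≤ a * N ^ 2 + |a| * (8 * ε * N) := by
    have : -a * (N * N - S * P) ≤ |a| * (8 * ε * N) :=
      mul_le_mul (neg_le_abs a) hSP' (by linarith) (abs_nonneg a)
    nlinarith
  have h3 : 2 * (N * |p₀|) ≤ N ^ 2 + p₀ ^ 2 := by
    nlinarith [sq_nonneg (N - |p₀|), sq_abs p₀]
  have h4 : A * (2 * (N * |p₀|)) ≤ A * (N ^ 2 + p₀ ^ 2) := mul_le_mul_of_nonneg_left h3 hA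
  nlinarith [sq_nonneg (p₀ - g₀), sq_nonneg (N - Γ), sq_nonneg p₀]

lemma le_of_forall_pos_le_add_mul {a b c : ℝ} (h : ∀ ε > 0, a ≤ b + ε * c) : a ≤ b := by
  have ht : Tendsto (fun ε : ℝ => b + ε * c) (nhdsWithin 0 (Ioi 0)) (nhds b) := by
    have : Continuous fun ε : ℝ => b + ε * c := by fun_prop
    simpa using (this.tendsto 0).mono_left nhdsWithin_le_nhds
  exact ge_of_tendsto ht (eventually_mem_nhdsWithin.mono fun ε hε => h ε hε)

/-- Energy estimate for the density `p₀² + (∑ |pᵢ|)²`, localized by a cutoff that moves inwards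
with the maximal speed `M`. -/
lemma localized_energy_le {p₀ : ℝ × ℝ × ℝ → ℝ} {p : Fin 4 → ℝ × ℝ × ℝ → ℝ}
    {d H B : ℝ × ℝ × ℝ → ℝ} {χ : ℝ → ℝ} {E : ℝ → ℝ → ℝ} {T X M C : ℝ}
    (hT : 0 ≤ T) (hX : 0 ≤ X) (hM : 0 ≤ M) (hC : 0 ≤ C)
    (hp₀ : ContDiff ℝ 1 p₀) (hp : ∀ i, ContDiff ℝ 1 (p i))
    (hd : Continuous d) (hH : Continuous H) (hB : Continuous B)
    (hE : Continuous fun p : ℝ × ℝ => E p.1 p.2)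
    (hχ : ContDiff ℝ 1 χ) (hχ0 : ∀ s, 0 ≤ χ s) (hχ' : ∀ s, deriv χ s ≤ 0)
    (hχX : ∀ s ≥ X, χ s = 0)
    (hsupp : ∀ t x v, M ≤ |v| → p₀ (t, x, v) = 0 ∧ ∀ i, p i (t, x, v) = 0)
    (hbd : ∀ t ∈ Icc 0 T, ∀ v ≥ 0, p₀ (t, 0, v) = 0 ∧ ∀ i, p i (t, 0, v) = 0)
    (hV : ∀ t ∈ Ioo 0 T, ∀ x > 0, ∀ v ∈ Ioo (-M) M, ∀ ε > 0,
      2 * p₀ (t, x, v) * fderiv ℝ p₀ (t, x, v) (1, v, E t x) +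
        2 * (∑ i, smoothAbs ε (p i (t, x, v))) *
          ∑ i, smoothSign ε (p i (t, x, v)) * fderiv ℝ (p i) (t, x, v) (1, v, E t x) ≤
      (C - d (t, x, v)) * (p₀ (t, x, v) ^ 2 + (∑ i, |p i (t, x, v)|) ^ 2) + H (t, x, v) +
        ε * B (t, x, v)) :
    (∫ x in 0..X, ∫ v in (-M)..M,
        χ (x + M * T) * (p₀ (T, x, v) ^ 2 + (∑ i, |p i (T, x, v)|) ^ 2)) +
      (∫ t in 0..T, ∫ x in 0..X, ∫ v in (-M)..M, Real.exp (C * (T - t)) * χ (x + M * t) *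
        (d (t, x, v) * (p₀ (t, x, v) ^ 2 + (∑ i, |p i (t, x, v)|) ^ 2))) ≤
      Real.exp (C * T) * (∫ x in 0..X, ∫ v in (-M)..M,
        χ x * (p₀ (0, x, v) ^ 2 + (∑ i, |p i (0, x, v)|) ^ 2)) +
      ∫ t in 0..T, ∫ x in 0..X, ∫ v in (-M)..M,
        Real.exp (C * (T - t)) * χ (x + M * t) * H (t, x, v) := by
  have hMM : -M ≤ M := by linarith
  set W : ℝ × ℝ × ℝ → ℝ := fun q => p₀ q ^ 2 + (∑ i, |p i q|) ^ 2 with hW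
  set N : ℝ × ℝ × ℝ → ℝ := fun q => ∑ i, |p i q| with hN
  have cN : Continuous N := by fun_prop
  set w : ℝ × ℝ × ℝ → ℝ := fun q => Real.exp (C * (T - q.1)) * χ (q.2.1 + M * q.1) with hw
  have hw0 : ∀ q, 0 ≤ w q := fun q => mul_nonneg (Real.exp_pos _).le (hχ0 _)
  set c : ℝ := (∫ x in 0..X, ∫ v in (-M)..M, w (T, x, v) * (8 * N (T, x, v))) +
    ∫ t in 0..T, ∫ x in 0..X, ∫ v in (-M)..M,
      w (t, x, v) * (B (t, x, v) + C * (8 * N (t, x, v)))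
  suffices hmain : (∫ x in 0..X, ∫ v in (-M)..M, w (T, x, v) * W (T, x, v)) +
      (∫ t in 0..T, ∫ x in 0..X, ∫ v in (-M)..M, w (t, x, v) * (d (t, x, v) * W (t, x, v))) ≤
      (∫ x in 0..X, ∫ v in (-M)..M, w (0, x, v) * W (0, x, v)) +
      ∫ t in 0..T, ∫ x in 0..X, ∫ v in (-M)..M, w (t, x, v) * H (t, x, v) by
    simpa [w, W, mul_assoc] using hmain
  refine le_of_forall_pos_le_add_mul (c := c) fun ε hε => ?_
  set S : ℝ × ℝ × ℝ → ℝ := fun q => ∑ i, smoothAbs ε (p i q) with hS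
  have dS : ContDiff ℝ 1 S := ContDiff.sum fun i _ => (contDiff_smoothAbs hε).comp (hp i)
  have hS0 : ∀ q, 0 ≤ S q := fun q => Finset.sum_nonneg fun i _ => smoothAbs_nonneg ε _
  have hSN : ∀ q, S q ≤ N q := fun q => Finset.sum_le_sum fun i _ => smoothAbs_le hε _
  have hNS : ∀ q, N q ≤ S q + 4 * ε := by
    intro q
    calc N q ≤ ∑ i, (smoothAbs ε (p i q) + ε) :=
          Finset.sum_le_sum fun i _ => abs_le_smoothAbs_add ε _
      _ = S q + 4 * ε := by simp [Finset.sum_add_distrib, S]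
  set Wε : ℝ × ℝ × ℝ → ℝ := fun q => p₀ q ^ 2 + S q ^ 2 with hWε
  have hWε0 : ∀ q, 0 ≤ Wε q := fun q => by positivity
  have hWεW : ∀ q, Wε q ≤ W q := fun q => by
    have := pow_le_pow_left₀ (hS0 q) (hSN q) 2
    simp only [hWε, hW]; linarith
  have hWWε : ∀ q, W q ≤ Wε q + ε * (8 * N q) := fun q => by
    have h1 := hS0 q
    have h2 := hSN q
    have h3 := hNS q
    change p₀ q ^ 2 + N q ^ 2 ≤ p₀ q ^ 2 + S q ^ 2 + ε * (8 * N q)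
    nlinarith
  have hWεz : ∀ q, p₀ q = 0 ∧ (∀ i, p i q = 0) → Wε q = 0 := by
    rintro q ⟨h0, hi⟩
    simp [hWε, hS, h0, hi, smoothAbs_zero hε]
  have dw : ContDiff ℝ 1 w := by
    have h1 : ContDiff ℝ 1 fun q : ℝ × ℝ × ℝ => C * (T - q.1) := by fun_prop
    have h2 : ContDiff ℝ 1 fun q : ℝ × ℝ × ℝ => q.2.1 + M * q.1 := by fun_prop
    exact h1.exp.mul (hχ.comp h2)
  have dWε : ContDiff ℝ 1 Wε := (hp₀.pow 2).add (dS.pow 2)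
  have hVd : ∀ t x v, fderiv ℝ (fun q => w q * Wε q) (t, x, v) (1, v, E t x) =
      (-C * w (t, x, v) + Real.exp (C * (T - t)) * ((M + v) * deriv χ (x + M * t))) *
        Wε (t, x, v) + w (t, x, v) *
      (2 * p₀ (t, x, v) * fderiv ℝ p₀ (t, x, v) (1, v, E t x) +
        2 * (∑ i, smoothAbs ε (p i (t, x, v))) *
          ∑ i, smoothSign ε (p i (t, x, v)) *
            fderiv ℝ (p i) (t, x, v) (1, v, E t x)) := by
    intro t x v
    set b : ℝ × ℝ × ℝ := (1, v, E t x)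
    have hγ : HasDerivAt (fun s : ℝ => (t, x, v) + s • b) b 0 := by
      simpa using ((hasDerivAt_id (0 : ℝ)).smul_const b).const_add (t, x, v)
    have hγ0 : (t, x, v) + (0 : ℝ) • b = (t, x, v) := by simp
    have line : ∀ {F : ℝ × ℝ × ℝ → ℝ}, ContDiff ℝ 1 F →
        HasDerivAt (fun s : ℝ => F ((t, x, v) + s • b)) (fderiv ℝ F (t, x, v) b) 0 := by
      intro F hF
      have := (hF.differentiable one_ne_zero ((t, x, v) + (0 : ℝ) • b)).hasFDerivAt.comp_hasDerivAt
        0 hγ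
      rwa [hγ0] at this
    have h1 := line (dw.mul dWε)
    have hlin : HasDerivAt (fun s : ℝ => C * (T - (t + s))) (-C) 0 := by
      simpa using (((hasDerivAt_id (0 : ℝ)).const_add t).const_sub T).const_mul C
    have hlin2 : HasDerivAt (fun s : ℝ => (x + s * v) + M * (t + s)) (v + M) 0 := by
      simpa using (((hasDerivAt_id (0 : ℝ)).mul_const v).const_add x).fun_add
        (((hasDerivAt_id (0 : ℝ)).const_add t).const_mul M)
    have hχd : HasDerivAt (fun s : ℝ => χ ((x + s * v) + M * (t + s)))
        (deriv χ (x + M * t) * (v + M)) 0 := by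
      have := (hχ.differentiable one_ne_zero
        ((x + 0 * v) + M * (t + 0))).hasDerivAt.comp 0 hlin2
      exact this.congr_deriv (by simp)
    have hwd : HasDerivAt (fun s : ℝ => w ((t, x, v) + s • b))
        (-C * w (t, x, v) + Real.exp (C * (T - t)) * ((M + v) * deriv χ (x + M * t))) 0 := by
      have hfun : (fun s : ℝ => w ((t, x, v) + s • b)) =
          fun s => Real.exp (C * (T - (t + s))) * χ ((x + s * v) + M * (t + s)) := by
        funext s; simp [w, b]
      rw [hfun]
      exact (hlin.exp.fun_mul hχd).congr_deriv (by simp [w]; ring)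
    have hSd : HasDerivAt (fun s : ℝ => S ((t, x, v) + s • b))
        (∑ i, smoothSign ε (p i (t, x, v)) * fderiv ℝ (p i) (t, x, v) b) 0 := by
      refine HasDerivAt.fun_sum fun i _ => ?_
      have := (hasDerivAt_smoothAbs hε (p i ((t, x, v) + (0 : ℝ) • b))).comp 0 (line (hp i))
      rwa [hγ0] at this
    have hWd := ((line hp₀).fun_pow 2).fun_add (hSd.fun_pow 2)
    have h2 := hwd.fun_mul hWd
    rw [h1.unique h2]
    simp [hWε, hS]
  have hineq : ∀ t ∈ Ioo 0 T, ∀ x ∈ Ioo 0 X, ∀ v ∈ Ioo (-M) M,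
      fderiv ℝ (fun q => w q * Wε q) (t, x, v) (1, v, E t x) ≤
      w (t, x, v) * H (t, x, v) - w (t, x, v) * (d (t, x, v) * W (t, x, v)) +
        ε * (w (t, x, v) * (B (t, x, v) + C * (8 * N (t, x, v)))) := by
    intro t ht x hx v hv
    rw [hVd]
    have h1 := mul_le_mul_of_nonneg_left (hV t ht x hx.1 v hv ε hε) (hw0 (t, x, v))
    have h2 : Real.exp (C * (T - t)) * ((M + v) * deriv χ (x + M * t)) * Wε (t, x, v) ≤ 0 := by
      refine mul_nonpos_of_nonpos_of_nonneg ?_ (hWε0 _)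
      refine mul_nonpos_of_nonneg_of_nonpos (Real.exp_pos _).le ?_
      exact mul_nonpos_of_nonneg_of_nonpos (by linarith [hv.1]) (hχ' _)
    have h3 := mul_le_mul_of_nonneg_left (hWWε (t, x, v)) (mul_nonneg hC (hw0 (t, x, v)))
    change _ ≤ w (t, x, v) * ((C - d (t, x, v)) * W (t, x, v) + H (t, x, v) +
      ε * B (t, x, v)) at h1
    linarith
  have hmain := transport_integral_le (E := E) (Φ := fun q => w q * Wε q) (T := T) (X := X)
    (M := M) hT hX hM (dw.mul dWε)
    (K := fun q => w q * H q - w q * (d q * W q) + ε * (w q * (B q + C * (8 * N q))))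
    (by fun_prop) hE
    (fun t x => ⟨by rw [hWεz _ (hsupp t x M (le_abs_self M)), mul_zero],
      by rw [hWεz _ (hsupp t x (-M) (by rw [abs_neg]; exact le_abs_self M)), mul_zero]⟩)
    (fun t ht v _ => by
      have : w (t, X, v) = 0 := by
        simp only [hw]
        rw [hχX _ (by nlinarith [ht.1]), mul_zero]
      rw [this, zero_mul])
    (fun t ht v => by
      rcases le_total 0 v with h | h
      · rw [hWεz _ (hbd t ht v h), mul_zero, mul_zero]
      · exact mul_nonpos_of_nonpos_of_nonneg h (mul_nonneg (hw0 _) (hWε0 _)))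
    hineq
  have mono2 : ∀ {F G : ℝ → ℝ → ℝ}, Continuous F.uncurry → Continuous G.uncurry →
      (∀ x v, F x v ≤ G x v) →
      (∫ x in 0..X, ∫ v in (-M)..M, F x v) ≤ ∫ x in 0..X, ∫ v in (-M)..M, G x v := by
    intro F G hF hG hFG
    refine intervalIntegral.integral_mono_on hX (Continuous.intervalIntegrable (by fun_prop) _ _)
      (Continuous.intervalIntegrable (by fun_prop) _ _) fun x _ => ?_
    exact intervalIntegral.integral_mono_on hMM (Continuous.intervalIntegrable (by fun_prop) _ _)
      (Continuous.intervalIntegrable (by fun_prop) _ _) fun v _ => hFG x v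
  have add2 : ∀ {F G : ℝ → ℝ → ℝ}, Continuous F.uncurry → Continuous G.uncurry →
      (∫ x in 0..X, ∫ v in (-M)..M, (F x v + G x v)) =
        (∫ x in 0..X, ∫ v in (-M)..M, F x v) + ∫ x in 0..X, ∫ v in (-M)..M, G x v := by
    intro F G hF hG
    rw [← intervalIntegral.integral_add (Continuous.intervalIntegrable (by fun_prop) _ _)
      (Continuous.intervalIntegrable (by fun_prop) _ _)]
    refine intervalIntegral.integral_congr fun x _ => ?_
    exact intervalIntegral.integral_add (Continuous.intervalIntegrable (by fun_prop) _ _)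
      (Continuous.intervalIntegrable (by fun_prop) _ _)
  have add3 : ∀ {F G : ℝ × ℝ × ℝ → ℝ}, Continuous F → Continuous G →
      (∫ t in 0..T, ∫ x in 0..X, ∫ v in (-M)..M, (F (t, x, v) + G (t, x, v))) =
        (∫ t in 0..T, ∫ x in 0..X, ∫ v in (-M)..M, F (t, x, v)) +
          ∫ t in 0..T, ∫ x in 0..X, ∫ v in (-M)..M, G (t, x, v) := by
    intro F G hF hG
    rw [← intervalIntegral.integral_add (Continuous.intervalIntegrable (by fun_prop) _ _)
      (Continuous.intervalIntegrable (by fun_prop) _ _)]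
    refine intervalIntegral.integral_congr fun t _ => ?_
    exact add2 (F := fun x v => F (t, x, v)) (G := fun x v => G (t, x, v)) (by fun_prop)
      (by fun_prop)
  have hfin : (∫ x in 0..X, ∫ v in (-M)..M, w (T, x, v) * W (T, x, v)) ≤
      (∫ x in 0..X, ∫ v in (-M)..M, w (T, x, v) * Wε (T, x, v)) +
        ε * ∫ x in 0..X, ∫ v in (-M)..M, w (T, x, v) * (8 * N (T, x, v)) := by
    simp only [← intervalIntegral.integral_const_mul]
    rw [← add2 (F := fun x v => w (T, x, v) * Wε (T, x, v))
      (G := fun x v => ε * (w (T, x, v) * (8 * N (T, x, v)))) (by fun_prop) (by fun_prop)]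
    refine mono2 (F := fun x v => w (T, x, v) * W (T, x, v))
      (G := fun x v => w (T, x, v) * Wε (T, x, v) + ε * (w (T, x, v) * (8 * N (T, x, v))))
      (by fun_prop) (by fun_prop) fun x v => ?_
    have := mul_le_mul_of_nonneg_left (hWWε (T, x, v)) (hw0 (T, x, v))
    linarith
  have hini : (∫ x in 0..X, ∫ v in (-M)..M, w (0, x, v) * Wε (0, x, v)) ≤
      ∫ x in 0..X, ∫ v in (-M)..M, w (0, x, v) * W (0, x, v) :=
    mono2 (F := fun x v => w (0, x, v) * Wε (0, x, v)) (G := fun x v => w (0, x, v) * W (0, x, v))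
      (by fun_prop) (by fun_prop) fun x v => mul_le_mul_of_nonneg_left (hWεW _) (hw0 _)
  have hK : (∫ t in 0..T, ∫ x in 0..X, ∫ v in (-M)..M,
      (w (t, x, v) * H (t, x, v) - w (t, x, v) * (d (t, x, v) * W (t, x, v)) +
        ε * (w (t, x, v) * (B (t, x, v) + C * (8 * N (t, x, v)))))) +
      (∫ t in 0..T, ∫ x in 0..X, ∫ v in (-M)..M, w (t, x, v) * (d (t, x, v) * W (t, x, v))) =
      (∫ t in 0..T, ∫ x in 0..X, ∫ v in (-M)..M, w (t, x, v) * H (t, x, v)) +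
      ε * ∫ t in 0..T, ∫ x in 0..X, ∫ v in (-M)..M,
        w (t, x, v) * (B (t, x, v) + C * (8 * N (t, x, v))) := by
    simp only [← intervalIntegral.integral_const_mul]
    rw [← add3 (F := fun q => w q * H q - w q * (d q * W q) + ε * (w q * (B q + C * (8 * N q))))
      (G := fun q => w q * (d q * W q)) (by fun_prop) (by fun_prop),
      ← add3 (F := fun q => w q * H q) (G := fun q => ε * (w q * (B q + C * (8 * N q))))
      (by fun_prop) (by fun_prop)]
    simp only [sub_add_eq_add_sub, add_sub_cancel_right]
  have hc : ε * c = ε * (∫ x in 0..X, ∫ v in (-M)..M, w (T, x, v) * (8 * N (T, x, v))) +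
    ε * ∫ t in 0..T, ∫ x in 0..X, ∫ v in (-M)..M,
      w (t, x, v) * (B (t, x, v) + C * (8 * N (t, x, v))) := mul_add _ _ _
  rw [hc]
  linarith

/-- Differentiating the transport equation `Dg(b) = S` in a constant direction `w`. -/
lemma fderiv_fderiv_apply_of_transport {V : Type*} [NormedAddCommGroup V] [NormedSpace ℝ V]
    {g S : V → ℝ} {b : V → V} {z : V} (hg : ContDiff ℝ 2 g) (hb : DifferentiableAt ℝ b z)
    (heq : ∀ᶠ y in nhds z, fderiv ℝ g y (b y) = S y) (w : V) :
    fderiv ℝ (fun y => fderiv ℝ g y w) z (b z) =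
      fderiv ℝ S z w - fderiv ℝ g z (fderiv ℝ b z w) := by
  have hdg : DifferentiableAt ℝ (fderiv ℝ g) z :=
    (hg.fderiv_right (m := 1) le_rfl).differentiable one_ne_zero z
  have hsymm : IsSymmSndFDerivAt ℝ g z := hg.contDiffAt.isSymmSndFDerivAt (by simp)
  rw [← Filter.EventuallyEq.fderiv_eq heq, fderiv_clm_apply hdg hb,
    fderiv_clm_apply hdg (differentiableAt_const w)]
  simp [hsymm.eq w (b z)]

/-- The weighted function `e^{αx/2} f` on `ℝ × ℝ × ℝ³`. -/
noncomputable def weighted (α : ℝ) (f : ℝ → ℝ → ℝ × ℝ × ℝ → ℝ) (z : ℝ × ℝ × (ℝ × ℝ × ℝ)) : ℝ :=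
  Real.exp (α * z.2.1 / 2) * f z.1 z.2.1 z.2.2

lemma contDiff_weighted {n : WithTop ℕ∞} {f : ℝ → ℝ → ℝ × ℝ × ℝ → ℝ} (α : ℝ)
    (hf : ContDiff ℝ n (fun p : ℝ × ℝ × (ℝ × ℝ × ℝ) => f p.1 p.2.1 p.2.2)) :
    ContDiff ℝ n (weighted α f) := by
  have h : ContDiff ℝ n fun z : ℝ × ℝ × (ℝ × ℝ × ℝ) => α * z.2.1 / 2 := by fun_prop
  exact h.exp.mul hf

/-- The coordinate directions of `(x, ξ)` in `ℝ × ℝ × ℝ³`. -/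
def phaseDir : Fin 4 → ℝ × ℝ × (ℝ × ℝ × ℝ) :=
  ![(0, 1, 0, 0, 0), (0, 0, 1, 0, 0), (0, 0, 0, 1, 0), (0, 0, 0, 0, 1)]

/-- The integrand of `wH1`. -/
noncomputable def energyDensity (α : ℝ) (g : ℝ → ℝ × ℝ × ℝ → ℝ) (x : ℝ) (ξ : ℝ × ℝ × ℝ) : ℝ :=
  (Real.exp (α * x / 2) * g x ξ) ^ 2 +
    ‖fderiv ℝ (fun p : ℝ × (ℝ × ℝ × ℝ) => Real.exp (α * p.1 / 2) * g p.1 p.2) (x, ξ)‖ ^ 2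

lemma energyDensity_nonneg (α : ℝ) (g : ℝ → ℝ × ℝ × ℝ → ℝ) (x : ℝ) (ξ : ℝ × ℝ × ℝ) :
    0 ≤ energyDensity α g x ξ := by
  unfold energyDensity; positivity

lemma energyDensity_eq {α : ℝ} {f : ℝ → ℝ → ℝ × ℝ × ℝ → ℝ}
    (hf : Differentiable ℝ (weighted α f)) (t x : ℝ) (ξ : ℝ × ℝ × ℝ) :
    energyDensity α (f t) x ξ = weighted α f (t, x, ξ) ^ 2 +
      (∑ i, |fderiv ℝ (weighted α f) (t, x, ξ) (phaseDir i)|) ^ 2 := by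
  have h : fderiv ℝ (fun p : ℝ × (ℝ × ℝ × ℝ) => Real.exp (α * p.1 / 2) * f t p.1 p.2) (x, ξ) =
      (fderiv ℝ (weighted α f) (t, x, ξ)).comp
        (ContinuousLinearMap.inr ℝ ℝ (ℝ × (ℝ × ℝ × ℝ))) :=
    ((hf (t, x, ξ)).hasFDerivAt.comp (x, ξ) (hasFDerivAt_prodMk_right t (x, ξ))).fderiv
  rw [energyDensity, h, norm_dual_prod, Fin.sum_univ_four]
  rfl

lemma continuous_energyDensity {α : ℝ} {f : ℝ → ℝ → ℝ × ℝ × ℝ → ℝ}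
    (hf : ContDiff ℝ 1 (weighted α f)) :
    Continuous fun z : ℝ × ℝ × (ℝ × ℝ × ℝ) => energyDensity α (f z.1) z.2.1 z.2.2 := by
  have h1 := hf.continuous
  have h2 := hf.continuous_fderiv one_ne_zero
  simp only [energyDensity_eq (hf.differentiable one_ne_zero)]
  fun_prop

/-- The coefficient of the zeroth order term in the equation for `e^{αx/2} f`. -/
noncomputable def growthRate (α θ u : ℝ) (E : ℝ → ℝ → ℝ) (z : ℝ × ℝ × (ℝ × ℝ × ℝ)) : ℝ :=
  α / 2 * z.2.2.1 + (z.2.2.1 - u) / (2 * θ) * E z.1 z.2.1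

/-- The transport field of the Vlasov equation. -/
def vlasovField (E : ℝ → ℝ → ℝ) (z : ℝ × ℝ × (ℝ × ℝ × ℝ)) : ℝ × ℝ × (ℝ × ℝ × ℝ) :=
  (1, z.2.2.1, (E z.1 z.2.1, 0, 0))

/-- The equation satisfied by `e^{αx/2} f`. -/
lemma fderiv_weighted_vlasovField {α θ u : ℝ} {E : ℝ → ℝ → ℝ} {f F : ℝ → ℝ → ℝ × ℝ × ℝ → ℝ}
    (hf : Differentiable ℝ (fun p : ℝ × ℝ × (ℝ × ℝ × ℝ) => f p.1 p.2.1 p.2.2))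
    {t x : ℝ} {ξ : ℝ × ℝ × ℝ}
    (h : deriv (fun s => f s x ξ) t + ξ.1 * deriv (fun y => f t y ξ) x
        + E t x * deriv (fun v => f t x (v, ξ.2)) ξ.1
        - ((ξ.1 - u) / (2*θ)) * E t x * f t x ξ = F t x ξ) :
    fderiv ℝ (weighted α f) (t, x, ξ) (vlasovField E (t, x, ξ)) =
      growthRate α θ u E (t, x, ξ) * weighted α f (t, x, ξ) + weighted α F (t, x, ξ) := by
  set g : ℝ × ℝ × (ℝ × ℝ × ℝ) → ℝ := fun p => f p.1 p.2.1 p.2.2 with hg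
  have h1 : HasDerivAt (fun s => f s x ξ) (fderiv ℝ g (t, x, ξ) (1, 0, 0)) t :=
    HasFDerivAt.comp_hasDerivAt (l := g) t (hf (t, x, ξ)).hasFDerivAt
      ((hasDerivAt_id t).prodMk (hasDerivAt_const t (x, ξ)))
  have h2 : HasDerivAt (fun y => f t y ξ) (fderiv ℝ g (t, x, ξ) (0, 1, 0)) x :=
    HasFDerivAt.comp_hasDerivAt (l := g) x (hf (t, x, ξ)).hasFDerivAt
      ((hasDerivAt_const x t).prodMk ((hasDerivAt_id x).prodMk (hasDerivAt_const x ξ)))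
  have h3 : HasDerivAt (fun v => f t x (v, ξ.2)) (fderiv ℝ g (t, x, ξ) (0, 0, (1, 0))) ξ.1 :=
    HasFDerivAt.comp_hasDerivAt (l := g) ξ.1 (hf (t, x, ξ)).hasFDerivAt
      ((hasDerivAt_const ξ.1 t).prodMk ((hasDerivAt_const ξ.1 x).prodMk
        ((hasDerivAt_id ξ.1).prodMk (hasDerivAt_const ξ.1 ξ.2))))
  rw [h1.deriv, h2.deriv, h3.deriv] at h
  have hb : vlasovField E (t, x, ξ) =
      (1, 0, 0) + ξ.1 • (0, 1, 0) + E t x • (0, 0, ((1 : ℝ), (0 : ℝ × ℝ))) := by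
    simp [vlasovField]
  have hexp : HasFDerivAt (fun z : ℝ × ℝ × (ℝ × ℝ × ℝ) => Real.exp (α * z.2.1 / 2))
      ((Real.exp (α * x / 2) * (α / 2)) • (ContinuousLinearMap.fst ℝ ℝ (ℝ × ℝ × ℝ)).comp
        (ContinuousLinearMap.snd ℝ ℝ (ℝ × (ℝ × ℝ × ℝ)))) (t, x, ξ) := by
    have hl : HasDerivAt (fun y : ℝ => Real.exp (α * y / 2)) (Real.exp (α * x / 2) * (α / 2)) x := by
      simpa using (((hasDerivAt_id x).const_mul α).div_const 2).exp
    exact hl.comp_hasFDerivAt (t, x, ξ)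
      ((ContinuousLinearMap.fst ℝ ℝ (ℝ × ℝ × ℝ)).comp
        (ContinuousLinearMap.snd ℝ ℝ (ℝ × (ℝ × ℝ × ℝ)))).hasFDerivAt
  have hw : fderiv ℝ (weighted α f) (t, x, ξ) = _ :=
    (hexp.mul (hf (t, x, ξ)).hasFDerivAt).fderiv
  rw [hw]
  have hdir : fderiv ℝ g (t, x, ξ) (vlasovField E (t, x, ξ)) =
      F t x ξ + ((ξ.1 - u) / (2*θ)) * E t x * f t x ξ := by
    rw [hb]
    simp only [map_add, map_smul, smul_eq_mul]
    linarith
  simp only [add_apply, smul_apply, hdir]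
  simp [vlasovField, growthRate, weighted]
  ring

/-- The equation satisfied by the derivatives of `e^{αx/2} f`. -/
lemma fderiv_fderiv_weighted_vlasovField {α θ u T₀ : ℝ} {E : ℝ → ℝ → ℝ}
    {f F : ℝ → ℝ → ℝ × ℝ × ℝ → ℝ} (hE : ContDiff ℝ 1 (fun p : ℝ × ℝ => E p.1 p.2))
    (hF : ContDiff ℝ 1 (fun p : ℝ × ℝ × (ℝ × ℝ × ℝ) => F p.1 p.2.1 p.2.2))
    (hf : ContDiff ℝ 2 (fun p : ℝ × ℝ × (ℝ × ℝ × ℝ) => f p.1 p.2.1 p.2.2))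
    (heq : ∀ t ∈ Set.Ioo 0 T₀, ∀ x > (0:ℝ), ∀ ξ : ℝ × ℝ × ℝ,
      deriv (fun s => f s x ξ) t + ξ.1 * deriv (fun y => f t y ξ) x
        + E t x * deriv (fun v => f t x (v, ξ.2)) ξ.1
        - ((ξ.1 - u) / (2*θ)) * E t x * f t x ξ = F t x ξ)
    {t x : ℝ} (ht : t ∈ Ioo 0 T₀) (hx : 0 < x) (ξ : ℝ × ℝ × ℝ) (w : ℝ × (ℝ × ℝ × ℝ)) :
    fderiv ℝ (fun y => fderiv ℝ (weighted α f) y (0, w)) (t, x, ξ) (vlasovField E (t, x, ξ)) =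
      growthRate α θ u E (t, x, ξ) * fderiv ℝ (weighted α f) (t, x, ξ) (0, w) +
      ((w.1 * ((ξ.1 - u) / (2 * θ) * deriv (E t) x) + w.2.1 * (α / 2 + E t x / (2 * θ))) *
          weighted α f (t, x, ξ) -
        w.2.1 * fderiv ℝ (weighted α f) (t, x, ξ) (phaseDir 0) -
        w.1 * deriv (E t) x * fderiv ℝ (weighted α f) (t, x, ξ) (phaseDir 1) +
        fderiv ℝ (weighted α F) (t, x, ξ) (0, w)) := by
  set z : ℝ × ℝ × (ℝ × ℝ × ℝ) := (t, x, ξ) with hz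
  have hbd : Differentiable ℝ (vlasovField E) := by
    unfold vlasovField; fun_prop
  have had : Differentiable ℝ (growthRate α θ u E) := by
    unfold growthRate; fun_prop
  have hgd : Differentiable ℝ (weighted α f) :=
    (contDiff_weighted α hf).differentiable two_ne_zero
  have hGd : Differentiable ℝ (weighted α F) :=
    (contDiff_weighted α hF).differentiable one_ne_zero
  have hmem : ∀ᶠ y : ℝ × ℝ × (ℝ × ℝ × ℝ) in nhds z, y.1 ∈ Ioo 0 T₀ ∧ 0 < y.2.1 :=
    (continuous_fst.continuousAt.eventually (isOpen_Ioo.mem_nhds ht)).and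
      ((continuous_fst.comp continuous_snd).continuousAt.eventually (isOpen_Ioi.mem_nhds hx))
  have hloc : ∀ᶠ y in nhds z, fderiv ℝ (weighted α f) y (vlasovField E y) =
      growthRate α θ u E y * weighted α f y + weighted α F y := by
    filter_upwards [hmem] with y hy
    exact fderiv_weighted_vlasovField (hf.differentiable two_ne_zero) (heq y.1 hy.1 y.2.1 hy.2 y.2.2)
  rw [fderiv_fderiv_apply_of_transport (contDiff_weighted α hf) (hbd z) hloc (0, w)]
  have hγ : HasDerivAt (fun s : ℝ => z + s • ((0, w) : ℝ × ℝ × (ℝ × ℝ × ℝ))) (0, w) 0 := by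
    simpa using ((hasDerivAt_id (0 : ℝ)).smul_const
      ((0, w) : ℝ × ℝ × (ℝ × ℝ × ℝ))).const_add z
  have hlx : HasDerivAt (fun s : ℝ => x + s * w.1) w.1 0 := by
    simpa using ((hasDerivAt_id (0 : ℝ)).mul_const w.1).const_add x
  have hlv : HasDerivAt (fun s : ℝ => ξ.1 + s * w.2.1) w.2.1 0 := by
    simpa using ((hasDerivAt_id (0 : ℝ)).mul_const w.2.1).const_add ξ.1
  have hEx : DifferentiableAt ℝ (E t) x :=
    ((hE.differentiable one_ne_zero (t, x)).comp x
      ((differentiableAt_const t).prodMk differentiableAt_id))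
  have hlE : HasDerivAt (fun s : ℝ => E t (x + s * w.1)) (deriv (E t) x * w.1) 0 := by
    have : HasDerivAt (E t) (deriv (E t) x) (x + 0 * w.1) := by simpa using hEx.hasDerivAt
    exact this.comp 0 hlx
  have ha : fderiv ℝ (growthRate α θ u E) z (0, w) =
      w.1 * ((ξ.1 - u) / (2 * θ) * deriv (E t) x) + w.2.1 * (α / 2 + E t x / (2 * θ)) := by
    have h1 : HasFDerivAt (growthRate α θ u E) (fderiv ℝ (growthRate α θ u E) z)
        (z + (0 : ℝ) • ((0, w) : ℝ × ℝ × (ℝ × ℝ × ℝ))) := by simpa using (had z).hasFDerivAt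
    have h2 := (hlv.const_mul (α / 2)).fun_add (((hlv.sub_const u).div_const (2 * θ)).fun_mul hlE)
    refine (h1.comp_hasDerivAt 0 hγ).unique ?_
    have hfun : (growthRate α θ u E ∘ fun s : ℝ => z + s • ((0, w) : ℝ × ℝ × (ℝ × ℝ × ℝ))) =
        fun s => α / 2 * (ξ.1 + s * w.2.1) + (ξ.1 + s * w.2.1 - u) / (2 * θ) *
          E t (x + s * w.1) := by
      funext s; simp [growthRate, z]
    rw [hfun]
    exact h2.congr_deriv (by simp; ring)
  have hb : fderiv ℝ (vlasovField E) z (0, w) = (0, w.2.1, (w.1 * deriv (E t) x, 0, 0)) := by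
    have h1 : HasFDerivAt (vlasovField E) (fderiv ℝ (vlasovField E) z)
        (z + (0 : ℝ) • ((0, w) : ℝ × ℝ × (ℝ × ℝ × ℝ))) := by simpa using (hbd z).hasFDerivAt
    have h2 := (hasDerivAt_const (0 : ℝ) (1 : ℝ)).prodMk
      (hlv.prodMk (hlE.prodMk (hasDerivAt_const (0 : ℝ) ((0, 0) : ℝ × ℝ))))
    refine (h1.comp_hasDerivAt 0 hγ).unique ?_
    have hfun : (vlasovField E ∘ fun s : ℝ => z + s • ((0, w) : ℝ × ℝ × (ℝ × ℝ × ℝ))) =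
        fun s => (1, ξ.1 + s * w.2.1, (E t (x + s * w.1), (0, 0))) := by
      funext s; simp [vlasovField, z]
    rw [hfun]
    exact h2.congr_deriv (by simp only [mul_comm (deriv (E t) x)]; rfl)
  have hsplit : ((0, w.2.1, (w.1 * deriv (E t) x, 0, 0)) : ℝ × ℝ × (ℝ × ℝ × ℝ)) =
      w.2.1 • phaseDir 0 + (w.1 * deriv (E t) x) • phaseDir 1 := by simp [phaseDir]
  rw [hb, hsplit, fderiv_fun_add ((had z).fun_mul (hgd z)) (hGd z),
    fderiv_fun_mul (had z) (hgd z)]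
  simp only [add_apply, smul_apply, map_add, map_smul,
    smul_eq_mul, ha]
  ring

/-- The weight `e^{αx/2}` turns the growth rate into damping for negative velocities. -/
lemma growth_le_sub_damping {α θ u R₀ v e e' : ℝ} (hα : 0 < α) (hθ : 0 < θ) (hR : 0 < R₀)
    (hv : v ≤ R₀) (he : |e| + |e'| ≤ min 1 (α * θ / 2)) :
    2 * (α / 2 * v + (v - u) / (2 * θ) * e) +
        (|(v - u) / (2 * θ) * e'| + |α / 2 + e / (2 * θ)|) + 5 ≤
      (3 / 2 * α * R₀ + α / 2 * |u| + α / 2 + 1 / (2 * θ) + 5) - α / 2 * max (-v) 0 := by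
  have h2θ : 0 < 2 * θ := by linarith
  have he1 : |e| ≤ 1 := by linarith [min_le_left 1 (α * θ / 2), abs_nonneg e']
  have he2 : |e| + |e'| ≤ α * θ / 2 := he.trans (min_le_right _ _)
  have h1 : (v - u) / (2 * θ) * e ≤ |v - u| / (2 * θ) * |e| := by
    refine (le_abs_self _).trans ?_
    rw [abs_mul, abs_div, abs_of_pos h2θ]
  have h2 : |(v - u) / (2 * θ) * e'| = |v - u| / (2 * θ) * |e'| := by
    rw [abs_mul, abs_div, abs_of_pos h2θ]
  have h3 : |α / 2 + e / (2 * θ)| ≤ α / 2 + 1 / (2 * θ) := by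
    refine (abs_add_le _ _).trans ?_
    rw [abs_of_pos (by positivity : 0 < α / 2), abs_div, abs_of_pos h2θ]
    gcongr
  have h4 : |v - u| / (2 * θ) * (2 * |e| + |e'|) ≤ α / 2 * |v - u| := by
    calc |v - u| / (2 * θ) * (2 * |e| + |e'|) ≤ |v - u| / (2 * θ) * (2 * (α * θ / 2)) := by
          gcongr; linarith [abs_nonneg e']
      _ = α / 2 * |v - u| := by field_simp
  have h5 : |v - u| ≤ |v| + |u| := abs_sub v u
  have h6 : α / 2 * |v - u| ≤ α / 2 * (|v| + |u|) := by gcongr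
  rw [h2]
  rcases le_total v 0 with h | h
  · rw [max_eq_left (by linarith)]
    rw [abs_of_nonpos h] at h6
    have : 0 < α * R₀ := by positivity
    linarith
  · rw [max_eq_right (by linarith)]
    rw [abs_of_nonneg h] at h6
    have : α * v ≤ α * R₀ := by gcongr
    linarith

/-- Outside the velocity support both the weighted function and its differential vanish. -/
lemma weighted_eq_zero_of_velocity {α L₀ R₀ : ℝ} {f : ℝ → ℝ → ℝ × ℝ × ℝ → ℝ}
    (hsupp : ∀ t x, ∀ ξ : ℝ × ℝ × ℝ, f t x ξ ≠ 0 → -L₀ ≤ ξ.1 ∧ ξ.1 ≤ R₀)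
    {z : ℝ × ℝ × (ℝ × ℝ × ℝ)} (hz : z.2.2.1 < -L₀ ∨ R₀ < z.2.2.1) :
    weighted α f z = 0 ∧ fderiv ℝ (weighted α f) z = 0 := by
  have hopen : IsOpen {y : ℝ × ℝ × (ℝ × ℝ × ℝ) | y.2.2.1 < -L₀ ∨ R₀ < y.2.2.1} :=
    (isOpen_lt (f := fun y : ℝ × ℝ × (ℝ × ℝ × ℝ) => y.2.2.1) (by fun_prop)
      continuous_const).union
    (isOpen_lt (g := fun y : ℝ × ℝ × (ℝ × ℝ × ℝ) => y.2.2.1) continuous_const (by fun_prop))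
  have hloc : weighted α f =ᶠ[nhds z] fun _ => 0 := by
    filter_upwards [hopen.mem_nhds hz] with y hy
    have : f y.1 y.2.1 y.2.2 = 0 := by
      by_contra hne
      have := hsupp _ _ _ hne
      rcases hy with hy | hy <;> linarith
    rw [weighted, this, mul_zero]
  exact ⟨hloc.eq_of_nhds, by rw [hloc.fderiv_eq]; simp⟩

/-- On the incoming part of the boundary the weighted function and its phase space gradient
vanish. -/
lemma weighted_eq_zero_of_boundary {α : ℝ} {f : ℝ → ℝ → ℝ × ℝ × ℝ → ℝ}
    (hf : Differentiable ℝ (weighted α f)) {U : Set (ℝ × (ℝ × ℝ × ℝ))} (hU : IsOpen U) {t : ℝ}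
    (hfU : ∀ p ∈ U, f t p.1 p.2 = 0) {p : ℝ × (ℝ × ℝ × ℝ)} (hp : p ∈ U) :
    weighted α f (t, p) = 0 ∧ ∀ w, fderiv ℝ (weighted α f) (t, p) (0, w) = 0 := by
  have hloc : (fun q => weighted α f (t, q)) =ᶠ[nhds p] fun _ => 0 := by
    filter_upwards [hU.mem_nhds hp] with q hq
    rw [weighted, hfU q hq, mul_zero]
  refine ⟨hloc.eq_of_nhds, fun w => ?_⟩
  have h : fderiv ℝ (fun q => weighted α f (t, q)) p =
      (fderiv ℝ (weighted α f) (t, p)).comp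
        (ContinuousLinearMap.inr ℝ ℝ (ℝ × (ℝ × ℝ × ℝ))) :=
    ((hf (t, p)).hasFDerivAt.comp p (hasFDerivAt_prodMk_right t p)).fderiv
  have h0 : fderiv ℝ (fun q => weighted α f (t, q)) p = 0 := by rw [hloc.fderiv_eq]; simp
  rw [h0] at h
  simpa using (DFunLike.congr_fun h w).symm

/-- The slice of phase space time with fixed tangential velocity `η`. -/
def sliceEmb (η : ℝ × ℝ) (q : ℝ × ℝ × ℝ) : ℝ × ℝ × (ℝ × ℝ × ℝ) := (q.1, q.2.1, (q.2.2, η))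

lemma contDiff_sliceEmb {n : WithTop ℕ∞} (η : ℝ × ℝ) : ContDiff ℝ n (sliceEmb η) := by
  unfold sliceEmb; fun_prop

lemma fderiv_comp_sliceEmb {G : ℝ × ℝ × (ℝ × ℝ × ℝ) → ℝ} (hG : Differentiable ℝ G) (η : ℝ × ℝ)
    (q : ℝ × ℝ × ℝ) (a v e : ℝ) :
    fderiv ℝ (fun q => G (sliceEmb η q)) q (a, v, e) =
      fderiv ℝ G (sliceEmb η q) (a, v, (e, 0, 0)) := by
  have hι : HasFDerivAt (sliceEmb η) ((ContinuousLinearMap.fst ℝ ℝ (ℝ × ℝ)).prod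
      (((ContinuousLinearMap.fst ℝ ℝ ℝ).comp (ContinuousLinearMap.snd ℝ ℝ (ℝ × ℝ))).prod
        (((ContinuousLinearMap.snd ℝ ℝ ℝ).comp (ContinuousLinearMap.snd ℝ ℝ (ℝ × ℝ))).prod 0)))
      q :=
    hasFDerivAt_fst.prodMk
      ((hasFDerivAt_fst.comp q hasFDerivAt_snd).prodMk
        ((hasFDerivAt_snd.comp q hasFDerivAt_snd).prodMk (hasFDerivAt_const η q)))
  have h := ((hG (sliceEmb η q)).hasFDerivAt.comp q hι).fderiv
  change fderiv ℝ (G ∘ sliceEmb η) q (a, v, e) = _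
  rw [h]
  rfl

/-- The localized weighted energy estimate at fixed tangential velocity. -/
lemma slice_energy_le {α θ u R₀ L₀ T₀ : ℝ} (hα : 0 < α) (hθ : 0 < θ) (hR : 0 < R₀) (hL : 0 < L₀)
    {E : ℝ → ℝ → ℝ} (hE : ContDiff ℝ 1 (fun p : ℝ × ℝ => E p.1 p.2))
    (hEs : ∀ t ∈ Icc 0 T₀, ∀ x ≥ (0:ℝ), |E t x| + |deriv (E t) x| ≤ min 1 (α * θ / 2))
    {f F : ℝ → ℝ → ℝ × ℝ × ℝ → ℝ}
    (hF : ContDiff ℝ 1 (fun p : ℝ × ℝ × (ℝ × ℝ × ℝ) => F p.1 p.2.1 p.2.2))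
    (hf : ContDiff ℝ 2 (fun p : ℝ × ℝ × (ℝ × ℝ × ℝ) => f p.1 p.2.1 p.2.2))
    (heq : ∀ t ∈ Set.Ioo 0 T₀, ∀ x > (0:ℝ), ∀ ξ : ℝ × ℝ × ℝ,
      deriv (fun s => f s x ξ) t + ξ.1 * deriv (fun y => f t y ξ) x
        + E t x * deriv (fun v => f t x (v, ξ.2)) ξ.1
        - ((ξ.1 - u) / (2*θ)) * E t x * f t x ξ = F t x ξ)
    {U : Set (ℝ × (ℝ × ℝ × ℝ))} (hU : IsOpen U)
    (hUb : {p : ℝ × (ℝ × ℝ × ℝ) | p.1 = 0 ∧ 0 ≤ p.2.1} ⊆ U)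
    (hfU : ∀ t ∈ Icc 0 T₀, ∀ p ∈ U, f t p.1 p.2 = 0)
    (hsupp : ∀ t x, ∀ ξ : ℝ × ℝ × ℝ, f t x ξ ≠ 0 → -L₀ ≤ ξ.1 ∧ ξ.1 ≤ R₀)
    {C : ℝ} (hC : C = 3 / 2 * α * R₀ + α / 2 * |u| + α / 2 + 1 / (2 * θ) + 5)
    {M : ℝ} (hM : M = L₀ + R₀) {χ : ℝ → ℝ} {X : ℝ} (hX : 0 ≤ X)
    (hχ : ContDiff ℝ 1 χ) (hχ0 : ∀ s, 0 ≤ χ s) (hχ' : ∀ s, deriv χ s ≤ 0)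
    (hχX : ∀ s ≥ X, χ s = 0) {T : ℝ} (hT : T ∈ Icc 0 T₀) (η : ℝ × ℝ) :
    (∫ x in 0..X, ∫ v in (-M)..M, χ (x + M * T) * energyDensity α (f T) x (v, η)) +
      (∫ t in 0..T, ∫ x in 0..X, ∫ v in (-M)..M, Real.exp (C * (T - t)) * χ (x + M * t) *
        (α / 2 * max (-v) 0 * energyDensity α (f t) x (v, η))) ≤
      Real.exp (C * T) * (∫ x in 0..X, ∫ v in (-M)..M,
        χ x * energyDensity α (f 0) x (v, η)) +
      ∫ t in 0..T, ∫ x in 0..X, ∫ v in (-M)..M,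
        Real.exp (C * (T - t)) * χ (x + M * t) * energyDensity α (F t) x (v, η) := by
  have hgc : ContDiff ℝ 2 (weighted α f) := contDiff_weighted α hf
  have hgd : Differentiable ℝ (weighted α f) := hgc.differentiable two_ne_zero
  have hGc : ContDiff ℝ 1 (weighted α F) := contDiff_weighted α hF
  have hGd : Differentiable ℝ (weighted α F) := hGc.differentiable one_ne_zero
  have hdc : ContDiff ℝ 1 (fderiv ℝ (weighted α f)) := hgc.fderiv_right le_rfl
  have hpc : ∀ i, ContDiff ℝ 1 fun y => fderiv ℝ (weighted α f) y (phaseDir i) := fun i =>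
    hdc.clm_apply contDiff_const
  have hac : Continuous (growthRate α θ u E) := by unfold growthRate; fun_prop
  have hιc : Continuous (sliceEmb η) := (contDiff_sliceEmb (n := 0) η).continuous
  have hdir : ∀ i, ∃ w, phaseDir i = (0, w) := by
    intro i; fin_cases i <;> exact ⟨_, rfl⟩
  have hmain := localized_energy_le (T := T) (X := X) (M := M) (C := C) (E := E) (χ := χ)
    (p₀ := fun q => weighted α f (sliceEmb η q))
    (p := fun i q => fderiv ℝ (weighted α f) (sliceEmb η q) (phaseDir i))
    (d := fun q => α / 2 * max (-q.2.2) 0)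
    (H := fun q => energyDensity α (F q.1) q.2.1 (q.2.2, η))
    (B := fun q => 16 * |growthRate α θ u E (sliceEmb η q)| *
      ∑ i, |fderiv ℝ (weighted α f) (sliceEmb η q) (phaseDir i)|)
    hT.1 hX (by linarith) (by rw [hC]; positivity)
    ((hgc.of_le one_le_two).comp (contDiff_sliceEmb η))
    (fun i => (hpc i).comp (contDiff_sliceEmb η))
    (by fun_prop) ((continuous_energyDensity hGc).comp hιc)
    (by
      have h1 := hac.comp hιc
      have h2 : ∀ i, Continuous fun q => fderiv ℝ (weighted α f) (sliceEmb η q) (phaseDir i) :=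
        fun i => (hpc i).continuous.comp hιc
      simp only [Function.comp_def] at h1
      fun_prop)
    hE.continuous hχ hχ0 hχ' hχX
    (fun t x v hv => by
      obtain ⟨h0, h1⟩ := weighted_eq_zero_of_velocity (α := α) hsupp (z := sliceEmb η (t, x, v))
        (by
          change v < -L₀ ∨ R₀ < v
          rcases le_abs.1 hv with h | h
          · right; linarith
          · left; linarith)
      exact ⟨h0, fun i => by rw [h1]; rfl⟩)
    (fun t ht v hv => by
      obtain ⟨h0, h1⟩ := weighted_eq_zero_of_boundary (α := α) hgd hU
        (hfU t ⟨ht.1, ht.2.trans hT.2⟩) (hUb (show ((0, (v, η)) : ℝ × (ℝ × ℝ × ℝ)) ∈ _ from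
          ⟨rfl, hv⟩))
      refine ⟨h0, fun i => ?_⟩
      obtain ⟨w, hw⟩ := hdir i
      rw [hw]
      exact h1 w)
    (fun t ht x hx v hv ε hε => by
      have ht₀ : t ∈ Ioo 0 T₀ := ⟨ht.1, ht.2.trans_le hT.2⟩
      set z : ℝ × ℝ × (ℝ × ℝ × ℝ) := (t, x, (v, η)) with hz
      have hzι : sliceEmb η (t, x, v) = z := rfl
      simp only [fderiv_comp_sliceEmb hgd,
        fderiv_comp_sliceEmb ((hpc _).differentiable one_ne_zero)]
      rw [hzι]
      change 2 * weighted α f z * fderiv ℝ (weighted α f) z (vlasovField E z) + _ *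
        ∑ i, _ * fderiv ℝ (fun y => fderiv ℝ (weighted α f) y (phaseDir i)) z
          (vlasovField E z) ≤ _
      rw [fderiv_weighted_vlasovField (hf.differentiable two_ne_zero)
        (heq t ht₀ x hx (v, η)), ← hz, energyDensity_eq hGd, ← hz]
      set a := growthRate α θ u E z
      set P : Fin 4 → ℝ := fun i => fderiv ℝ (weighted α f) z (phaseDir i) with hP
      set Q : Fin 4 → ℝ := fun i => fderiv ℝ (weighted α F) z (phaseDir i) with hQ
      set r : Fin 4 → ℝ := fun i => fderiv ℝ (fun y => fderiv ℝ (weighted α f) y (phaseDir i)) z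
          (vlasovField E z) - a * P i with hr
      set A := |(v - u) / (2 * θ) * deriv (E t) x| + |α / 2 + E t x / (2 * θ)| with hA
      have hEtx := hEs t (Ioo_subset_Icc_self ht₀) x hx.le
      have hE1 : |deriv (E t) x| ≤ 1 := by
        linarith [min_le_left 1 (α * θ / 2), abs_nonneg (E t x)]
      have key : ∀ w, _ := fun w => fderiv_fderiv_weighted_vlasovField (α := α) hE hF hf heq ht₀ hx
        (v, η) w
      have hr0 : r 0 = (v - u) / (2 * θ) * deriv (E t) x * weighted α f z
          - deriv (E t) x * P 1 + Q 0 := by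
        have := key (1, 0, 0, 0)
        simp only [hr, hP, hQ]
        change fderiv ℝ (fun y => fderiv ℝ (weighted α f) y (0, 1, 0, 0, 0)) _ _ - _ = _
        rw [this]
        simp [phaseDir]
        ring
      have hr1 : r 1 = (α / 2 + E t x / (2 * θ)) * weighted α f z - P 0 + Q 1 := by
        have := key (0, 1, 0, 0)
        change fderiv ℝ (fun y => fderiv ℝ (weighted α f) y (0, 0, 1, 0, 0)) _ _ - _ = _
        rw [this]
        simp [phaseDir, hP, hQ]
        ring
      have hr2 : r 2 = Q 2 := by
        have := key (0, 0, 1, 0)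
        change fderiv ℝ (fun y => fderiv ℝ (weighted α f) y (0, 0, 0, 1, 0)) _ _ - _ = _
        rw [this]
        simp [phaseDir, hP, hQ]
        ring
      have hr3 : r 3 = Q 3 := by
        have := key (0, 0, 0, 1)
        change fderiv ℝ (fun y => fderiv ℝ (weighted α f) y (0, 0, 0, 0, 1)) _ _ - _ = _
        rw [this]
        simp [phaseDir, hP, hQ]
        ring
      have hrs : ∑ i, |r i| ≤ A * |weighted α f z| + 2 * ∑ i, |P i| + ∑ i, |Q i| := by
        simp only [Fin.sum_univ_four, hr0, hr1, hr2, hr3]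
        have b0 : |(v - u) / (2 * θ) * deriv (E t) x * weighted α f z - deriv (E t) x * P 1 + Q 0|
            ≤ |(v - u) / (2 * θ) * deriv (E t) x| * |weighted α f z| + |P 1| + |Q 0| := by
          refine (abs_add_le _ _).trans (add_le_add_left ((abs_sub _ _).trans ?_) _)
          rw [abs_mul _ (weighted α f z), abs_mul _ (P 1)]
          gcongr
          exact mul_le_of_le_one_left (abs_nonneg _) hE1
        have b1 : |(α / 2 + E t x / (2 * θ)) * weighted α f z - P 0 + Q 1|
            ≤ |α / 2 + E t x / (2 * θ)| * |weighted α f z| + |P 0| + |Q 1| := by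
          refine (abs_add_le _ _).trans (add_le_add_left ((abs_sub _ _).trans ?_) _)
          rw [abs_mul]
        rw [hA, add_mul |_| |_|]
        linarith [abs_nonneg (P 0), abs_nonneg (P 1), abs_nonneg (P 2), abs_nonneg (P 3)]
      have hgrow := regularized_energy_growth (a := a) (g₀ := weighted α F z)
        (by positivity : 0 ≤ A) hε hrs
      have hrw : ∀ i, fderiv ℝ (fun y => fderiv ℝ (weighted α f) y (phaseDir i)) z
          (vlasovField E z) = a * P i + r i := fun i => by simp [hr]
      simp only [hrw]
      refine hgrow.trans ?_
      gcongr ?_ + _ + _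
      rcases le_or_gt v R₀ with hvR | hvR
      · refine mul_le_mul_of_nonneg_right ?_ (by positivity)
        rw [hC]
        exact growth_le_sub_damping hα hθ hR hvR hEtx
      · obtain ⟨h0, h1⟩ := weighted_eq_zero_of_velocity (α := α) hsupp (z := z) (Or.inr hvR)
        have hP0 : ∀ i, P i = 0 := fun i => by simp only [hP, h1]; rfl
        simp [h0, h1, hP0])
  simp only [energyDensity_eq hgd]
  exact hmain

/-- Tonelli's theorem, integrating last in the tangential velocity. -/
lemma lintegral_tangential {G : ℝ → ℝ × ℝ × ℝ → ENNReal}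
    (hG : Measurable fun z : ℝ × (ℝ × ℝ × ℝ) => G z.1 z.2) (S : Set ℝ) :
    ∫⁻ η : ℝ × ℝ, ∫⁻ x in S, ∫⁻ v : ℝ, G x (v, η) = ∫⁻ x in S, ∫⁻ ξ, G x ξ := by
  have hm : Measurable fun z : ((ℝ × ℝ) × ℝ) × ℝ => G z.1.2 (z.2, z.1.1) := by fun_prop
  rw [lintegral_lintegral_swap hm.lintegral_prod_right'.aemeasurable]
  refine lintegral_congr fun x => ?_
  have hx : Measurable (G x) := by fun_prop
  rw [Measure.volume_eq_prod ℝ (ℝ × ℝ), lintegral_prod_symm _ hx.aemeasurable]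

lemma lintegral_Ioi_le_of_forall_nat {h : ℝ → ENNReal} {c : ENNReal}
    (H : ∀ n : ℕ, ∫⁻ x in Ioc 0 (n : ℝ), h x ≤ c) : ∫⁻ x in Ioi 0, h x ≤ c := by
  have hU : Ioi (0 : ℝ) = ⋃ n : ℕ, Ioc 0 (n : ℝ) := by
    ext x
    simp only [mem_Ioi, mem_iUnion, mem_Ioc]
    exact ⟨fun hx => (exists_nat_ge x).imp fun n hn => ⟨hx, hn⟩, fun ⟨_, hx, _⟩ => hx⟩
  rw [hU, setLIntegral_iUnion_of_directed]
  · exact iSup_le H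
  · exact Monotone.directed_le fun m n hmn => Ioc_subset_Ioc_right (by exact_mod_cast hmn)

/-- Assembling estimates on slices with fixed tangential velocity and bounded `x`. -/
lemma lintegral_le_of_slices {D D₀ : ℝ → ℝ × ℝ × ℝ → ENNReal}
    {P K : ℝ → ℝ → ℝ × ℝ × ℝ → ENNReal} {T : ℝ}
    (hD : Measurable fun z : ℝ × (ℝ × ℝ × ℝ) => D z.1 z.2)
    (hD₀ : Measurable fun z : ℝ × (ℝ × ℝ × ℝ) => D₀ z.1 z.2)
    (hP : Measurable fun z : ℝ × ℝ × (ℝ × ℝ × ℝ) => P z.1 z.2.1 z.2.2)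
    (hK : Measurable fun z : ℝ × ℝ × (ℝ × ℝ × ℝ) => K z.1 z.2.1 z.2.2)
    (H : ∀ (η : ℝ × ℝ) (n : ℕ),
      (∫⁻ x in Ioc 0 (n : ℝ), ∫⁻ v : ℝ, D x (v, η)) +
        ∫⁻ t in Ioc 0 T, ∫⁻ x in Ioc 0 (n : ℝ), ∫⁻ v : ℝ, P t x (v, η) ≤
      (∫⁻ x in Ioi 0, ∫⁻ v : ℝ, D₀ x (v, η)) +
        ∫⁻ t in Ioc 0 T, ∫⁻ x in Ioi 0, ∫⁻ v : ℝ, K t x (v, η)) :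
    (∫⁻ x in Ioi 0, ∫⁻ ξ, D x ξ) + ∫⁻ t in Ioc 0 T, ∫⁻ x in Ioi 0, ∫⁻ ξ, P t x ξ ≤
      (∫⁻ x in Ioi 0, ∫⁻ ξ, D₀ x ξ) + ∫⁻ t in Ioc 0 T, ∫⁻ x in Ioi 0, ∫⁻ ξ, K t x ξ := by
  have mD : ∀ {G : ℝ → ℝ × ℝ × ℝ → ENNReal},
      Measurable (fun z : ℝ × (ℝ × ℝ × ℝ) => G z.1 z.2) →
      Measurable fun η : ℝ × ℝ => ∫⁻ x in Ioi 0, ∫⁻ v : ℝ, G x (v, η) := by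
    intro G hG
    have hm : Measurable fun z : ((ℝ × ℝ) × ℝ) × ℝ => G z.1.2 (z.2, z.1.1) := by fun_prop
    exact hm.lintegral_prod_right'.lintegral_prod_right'
  have tonelli : ∀ {G : ℝ → ℝ → ℝ × ℝ × ℝ → ENNReal},
      Measurable (fun z : ℝ × ℝ × (ℝ × ℝ × ℝ) => G z.1 z.2.1 z.2.2) →
      ∫⁻ η : ℝ × ℝ, ∫⁻ t in Ioc 0 T, ∫⁻ x in Ioi 0, ∫⁻ v : ℝ, G t x (v, η) =
        ∫⁻ t in Ioc 0 T, ∫⁻ x in Ioi 0, ∫⁻ ξ, G t x ξ := by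
    intro G hG
    have hm : Measurable fun z : (((ℝ × ℝ) × ℝ) × ℝ) × ℝ =>
        G z.1.1.2 z.1.2 (z.2, z.1.1.1) := by fun_prop
    rw [lintegral_lintegral_swap hm.lintegral_prod_right'.lintegral_prod_right'.aemeasurable]
    refine lintegral_congr fun t => lintegral_tangential ?_ _
    fun_prop
  have hslice : ∀ η : ℝ × ℝ,
      (∫⁻ x in Ioi 0, ∫⁻ v : ℝ, D x (v, η)) +
        ∫⁻ t in Ioc 0 T, ∫⁻ x in Ioi 0, ∫⁻ v : ℝ, P t x (v, η) ≤
      (∫⁻ x in Ioi 0, ∫⁻ v : ℝ, D₀ x (v, η)) +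
        ∫⁻ t in Ioc 0 T, ∫⁻ x in Ioi 0, ∫⁻ v : ℝ, K t x (v, η) := by
    intro η
    have m1 : Measurable fun z : ℝ × ℝ => D z.1 (z.2, η) := by fun_prop
    have m2 : Measurable fun z : (ℝ × ℝ) × ℝ => P z.1.1 z.1.2 (z.2, η) := by fun_prop
    have m3 : Measurable fun z : ℝ × ℝ => ∫⁻ v : ℝ, P z.1 z.2 (v, η) := m2.lintegral_prod_right'
    have hadd : ∀ S : Set ℝ, (∫⁻ x in S, ∫⁻ v : ℝ, D x (v, η)) +
        ∫⁻ t in Ioc 0 T, ∫⁻ x in S, ∫⁻ v : ℝ, P t x (v, η) =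
        ∫⁻ x in S, ((∫⁻ v : ℝ, D x (v, η)) + ∫⁻ t in Ioc 0 T, ∫⁻ v : ℝ, P t x (v, η)) := by
      intro S
      rw [lintegral_lintegral_swap (f := fun t x => ∫⁻ v : ℝ, P t x (v, η))
          m3.aemeasurable, lintegral_add_left m1.lintegral_prod_right']
    rw [hadd]
    refine lintegral_Ioi_le_of_forall_nat fun n => ?_
    rw [← hadd]
    exact H η n
  have h := lintegral_mono (μ := volume) hslice
  rwa [lintegral_add_left (mD hD), lintegral_add_left (mD hD₀), lintegral_tangential hD,
    lintegral_tangential hD₀, tonelli hP, tonelli hK] at h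

lemma ofReal_intervalIntegral {h : ℝ → ℝ} (hc : Continuous h) (h0 : ∀ x, 0 ≤ h x) {a b : ℝ}
    (hab : a ≤ b) :
    ENNReal.ofReal (∫ x in a..b, h x) = ∫⁻ x in Ioc a b, ENNReal.ofReal (h x) := by
  rw [intervalIntegral.integral_of_le hab, ofReal_integral_eq_lintegral_ofReal
    ((hc.integrableOn_Icc).mono_set Ioc_subset_Icc_self) (Eventually.of_forall h0)]

lemma ofReal_intervalIntegral₂ {G : ℝ → ℝ → ℝ} (hG : Continuous G.uncurry)
    (h0 : ∀ x v, 0 ≤ G x v) {a b c d : ℝ} (hab : a ≤ b) (hcd : c ≤ d) :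
    ENNReal.ofReal (∫ x in a..b, ∫ v in c..d, G x v) =
      ∫⁻ x in Ioc a b, ∫⁻ v in Ioc c d, ENNReal.ofReal (G x v) := by
  rw [ofReal_intervalIntegral (by fun_prop)
    (fun x => intervalIntegral.integral_nonneg hcd fun v _ => h0 x v) hab]
  exact lintegral_congr fun x => ofReal_intervalIntegral (by fun_prop) (h0 x) hcd

lemma ofReal_intervalIntegral₃ {G : ℝ → ℝ → ℝ → ℝ}
    (hG : Continuous fun q : ℝ × ℝ × ℝ => G q.1 q.2.1 q.2.2)
    (h0 : ∀ t x v, 0 ≤ G t x v) {T a b c d : ℝ} (hT : 0 ≤ T) (hab : a ≤ b) (hcd : c ≤ d) :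
    ENNReal.ofReal (∫ t in 0..T, ∫ x in a..b, ∫ v in c..d, G t x v) =
      ∫⁻ t in Ioc 0 T, ∫⁻ x in Ioc a b, ∫⁻ v in Ioc c d, ENNReal.ofReal (G t x v) := by
  rw [ofReal_intervalIntegral (by fun_prop) (fun t => intervalIntegral.integral_nonneg hab
    fun x _ => intervalIntegral.integral_nonneg hcd fun v _ => h0 t x v) hT]
  refine lintegral_congr fun t => ofReal_intervalIntegral₂ ?_ (h0 t) hab hcd
  exact hG.comp (continuous_const.prodMk continuous_id)

/-- Removing the cutoff from a family of localized estimates. -/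
lemma lintegral_le_of_cutoff {W K : ℝ → ℝ → ℝ → ℝ} {C M T κ : ℝ} (hT : 0 ≤ T) (hM : 0 ≤ M)
    (hκ : 0 ≤ κ) (hW : Continuous fun q : ℝ × ℝ × ℝ => W q.1 q.2.1 q.2.2)
    (hK : Continuous fun q : ℝ × ℝ × ℝ => K q.1 q.2.1 q.2.2)
    (hW0 : ∀ t x v, 0 ≤ W t x v) (hK0 : ∀ t x v, 0 ≤ K t x v)
    (hWM : ∀ t x v, M ≤ |v| → W t x v = 0)
    (H : ∀ (χ : ℝ → ℝ) (X : ℝ), 0 ≤ X → ContDiff ℝ 1 χ → (∀ s, 0 ≤ χ s) →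
      (∀ s, deriv χ s ≤ 0) → (∀ s ≥ X, χ s = 0) →
      (∫ x in 0..X, ∫ v in (-M)..M, χ (x + M * T) * W T x v) +
        (∫ t in 0..T, ∫ x in 0..X, ∫ v in (-M)..M, Real.exp (C * (T - t)) * χ (x + M * t) *
          (κ * max (-v) 0 * W t x v)) ≤
        Real.exp (C * T) * (∫ x in 0..X, ∫ v in (-M)..M, χ x * W 0 x v) +
        ∫ t in 0..T, ∫ x in 0..X, ∫ v in (-M)..M,
          Real.exp (C * (T - t)) * χ (x + M * t) * K t x v) (n : ℕ) :
    (∫⁻ x in Ioc 0 (n : ℝ), ∫⁻ v, ENNReal.ofReal (W T x v)) +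
      ∫⁻ t in Ioc 0 T, ∫⁻ x in Ioc 0 (n : ℝ), ∫⁻ v,
        ENNReal.ofReal (Real.exp (C * (T - t)) * (κ * max (-v) 0 * W t x v)) ≤
      (∫⁻ x in Ioi 0, ∫⁻ v, ENNReal.ofReal (Real.exp (C * T) * W 0 x v)) +
      ∫⁻ t in Ioc 0 T, ∫⁻ x in Ioi 0, ∫⁻ v, ENNReal.ofReal (Real.exp (C * (T - t)) * K t x v) := by
  have hn : (0 : ℝ) ≤ n := n.cast_nonneg
  have hMM : -M ≤ M := by linarith
  have hMT : 0 ≤ M * T := mul_nonneg hM hT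
  set X : ℝ := n + M * T + 1 with hXdef
  have hX : 0 ≤ X := by positivity
  have hnX : Ioc (0 : ℝ) n ⊆ Ioc 0 X := Ioc_subset_Ioc_right (by linarith)
  set χ : ℝ → ℝ := fun s => Real.smoothTransition (X - s) with hχdef
  have hχ : ContDiff ℝ 1 χ := Real.smoothTransition.contDiff.comp (by fun_prop)
  have hχ0 : ∀ s, 0 ≤ χ s := fun s => Real.smoothTransition.nonneg _
  have hχ1 : ∀ s, χ s ≤ 1 := fun s => Real.smoothTransition.le_one _
  have hχX : ∀ s ≥ X, χ s = 0 := fun s hs =>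
    Real.smoothTransition.zero_of_nonpos (by linarith)
  have hχn : ∀ x ∈ Ioc 0 (n : ℝ), ∀ t ≤ T, χ (x + M * t) = 1 := fun x hx t ht =>
    Real.smoothTransition.one_of_one_le (by
      have : M * t ≤ M * T := mul_le_mul_of_nonneg_left ht hM
      linarith [hx.2])
  have hχ' : ∀ s, deriv χ s ≤ 0 := fun s => Antitone.deriv_nonpos fun a b hab =>
    Real.smoothTransition.monotone (by linarith)
  have h := ENNReal.ofReal_le_ofReal (H χ X hX hχ hχ0 hχ' hχX)
  have i2 : ∀ {G : ℝ → ℝ → ℝ}, (∀ x v, 0 ≤ G x v) →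
      0 ≤ ∫ x in 0..X, ∫ v in (-M)..M, G x v := fun hG =>
    intervalIntegral.integral_nonneg hX fun x _ =>
      intervalIntegral.integral_nonneg hMM fun v _ => hG x v
  have z1 : ∀ x v, 0 ≤ χ (x + M * T) * W T x v := fun x v => mul_nonneg (hχ0 _) (hW0 _ _ _)
  have z2 : ∀ t x v, 0 ≤ Real.exp (C * (T - t)) * χ (x + M * t) * (κ * max (-v) 0 * W t x v) :=
    fun t x v => mul_nonneg (mul_nonneg (Real.exp_pos _).le (hχ0 _))
      (mul_nonneg (mul_nonneg hκ (le_max_right _ _)) (hW0 _ _ _))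
  have z3 : ∀ x v, 0 ≤ Real.exp (C * T) * (χ x * W 0 x v) := fun x v =>
    mul_nonneg (Real.exp_pos _).le (mul_nonneg (hχ0 _) (hW0 _ _ _))
  have z4 : ∀ t x v, 0 ≤ Real.exp (C * (T - t)) * χ (x + M * t) * K t x v :=
    fun t x v => mul_nonneg (mul_nonneg (Real.exp_pos _).le (hχ0 _)) (hK0 _ _ _)
  have cW : ∀ t, Continuous fun q : ℝ × ℝ => W t q.1 q.2 := fun t =>
    hW.comp (continuous_const.prodMk continuous_id)
  have c1 := cW T
  have c2 := cW 0
  simp only [← intervalIntegral.integral_const_mul (Real.exp (C * T))] at h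
  rw [ENNReal.ofReal_add (i2 z1) (intervalIntegral.integral_nonneg hT fun t _ => i2 (z2 t)),
    ENNReal.ofReal_add (i2 z3) (intervalIntegral.integral_nonneg hT fun t _ => i2 (z4 t)),
    ofReal_intervalIntegral₂ (by fun_prop) z1 hX hMM,
    ofReal_intervalIntegral₂ (by fun_prop) z3 hX hMM,
    ofReal_intervalIntegral₃ (by fun_prop) z2 hT hX hMM,
    ofReal_intervalIntegral₃ (by fun_prop) z4 hT hX hMM] at h
  have hlow : ∀ {G G' : ℝ → ℝ → ℝ}, (∀ x ∈ Ioc 0 (n : ℝ), ∀ v, G x v = G' x v) →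
      (∀ x v, M ≤ |v| → G x v = 0) →
      ∫⁻ x in Ioc 0 (n : ℝ), ∫⁻ v, ENNReal.ofReal (G x v) ≤
        ∫⁻ x in Ioc 0 X, ∫⁻ v in Ioc (-M) M, ENNReal.ofReal (G' x v) := by
    intro G G' hG hG0
    refine le_trans (setLIntegral_mono' measurableSet_Ioc fun x hx => ?_) (lintegral_mono_set hnX)
    simp only [← hG x hx]
    refine (setLIntegral_eq_of_support_subset fun v hv => ?_).ge
    have : |v| < M := by
      by_contra hcon
      exact hv (by simp [hG0 x v (not_lt.1 hcon)])
    exact ⟨(abs_lt.1 this).1, (abs_lt.1 this).2.le⟩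
  have hupp : ∀ {G G' : ℝ → ℝ → ℝ}, (∀ x v, G x v ≤ G' x v) →
      ∫⁻ x in Ioc 0 X, ∫⁻ v in Ioc (-M) M, ENNReal.ofReal (G x v) ≤
        ∫⁻ x in Ioi 0, ∫⁻ v, ENNReal.ofReal (G' x v) := by
    intro G G' hG
    refine le_trans (lintegral_mono fun x => ?_) (lintegral_mono_set Ioc_subset_Ioi_self)
    exact (lintegral_mono fun v => ENNReal.ofReal_le_ofReal (hG x v)).trans
      (setLIntegral_le_lintegral _ _)
  refine (add_le_add ?_ ?_).trans (h.trans (add_le_add ?_ ?_))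
  · exact hlow (fun x hx v => by rw [hχn x hx T le_rfl, one_mul]) fun x v hv => hWM T x v hv
  · refine setLIntegral_mono' measurableSet_Ioc fun t ht => ?_
    exact hlow (fun x hx v => by rw [hχn x hx t ht.2, mul_one])
      fun x v hv => by rw [hWM t x v hv]; simp
  · refine hupp fun x v => ?_
    gcongr
    exact mul_le_of_le_one_left (hW0 _ _ _) (hχ1 _)
  · refine lintegral_mono fun t => hupp fun x v => ?_
    rw [mul_assoc]
    gcongr
    exact mul_le_of_le_one_left (hK0 _ _ _) (hχ1 _)

lemma wH1_eq (α : ℝ) (g : ℝ → ℝ × ℝ × ℝ → ℝ) :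
    wH1 α g = ∫⁻ x in Ioi 0, ∫⁻ ξ, ENNReal.ofReal (energyDensity α g x ξ) := rfl

lemma wDiss_eq (α : ℝ) (g : ℝ → ℝ × ℝ × ℝ → ℝ) :
    wDiss α g =
      ∫⁻ x in Ioi 0, ∫⁻ ξ : ℝ × ℝ × ℝ, ENNReal.ofReal (max (-ξ.1) 0 * energyDensity α g x ξ) := by
  refine lintegral_congr fun x => ?_
  have hS : MeasurableSet {ξ : ℝ × ℝ × ℝ | ξ.1 < 0} := measurableSet_lt measurable_fst measurable_const
  have hsub : (Function.support fun ξ : ℝ × ℝ × ℝ =>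
      ENNReal.ofReal (max (-ξ.1) 0 * energyDensity α g x ξ)) ⊆ {ξ | ξ.1 < 0} := by
    intro ξ hξ
    by_contra hcon
    have hnn : 0 ≤ ξ.1 := not_lt.1 fun h => hcon h
    exact hξ (by simp [max_eq_right (neg_nonpos.2 hnn)])
  rw [← setLIntegral_eq_of_support_subset hsub]
  refine setLIntegral_congr_fun hS fun ξ hξ => ?_
  have hneg : ξ.1 < 0 := hξ
  rw [max_eq_left (neg_nonneg.2 hneg.le), ← abs_of_neg hneg]
  rfl

lemma lintegral_lintegral_ofReal_const_mul {X Y : Type*} [MeasurableSpace X] [MeasurableSpace Y]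
    {μ : Measure X} {ν : Measure Y} {c : ℝ} (hc : 0 ≤ c) (G : X → Y → ℝ) :
    ∫⁻ x, ∫⁻ y, ENNReal.ofReal (c * G x y) ∂ν ∂μ =
      ENNReal.ofReal c * ∫⁻ x, ∫⁻ y, ENNReal.ofReal (G x y) ∂ν ∂μ := by
  simp only [ENNReal.ofReal_mul hc, lintegral_const_mul' _ _ ENNReal.ofReal_ne_top]

lemma wH1_add_wDiss_le {α θ u R₀ L₀ T₀ : ℝ} (hα : 0 < α) (hθ : 0 < θ) (hR : 0 < R₀) (hL : 0 < L₀)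
    {E : ℝ → ℝ → ℝ} (hE : ContDiff ℝ 1 (fun p : ℝ × ℝ => E p.1 p.2))
    (hEs : ∀ t ∈ Icc 0 T₀, ∀ x ≥ (0:ℝ), |E t x| + |deriv (E t) x| ≤ min 1 (α * θ / 2))
    {f F : ℝ → ℝ → ℝ × ℝ × ℝ → ℝ}
    (hF : ContDiff ℝ 1 (fun p : ℝ × ℝ × (ℝ × ℝ × ℝ) => F p.1 p.2.1 p.2.2))
    (hf : ContDiff ℝ 2 (fun p : ℝ × ℝ × (ℝ × ℝ × ℝ) => f p.1 p.2.1 p.2.2))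
    (heq : ∀ t ∈ Set.Ioo 0 T₀, ∀ x > (0:ℝ), ∀ ξ : ℝ × ℝ × ℝ,
      deriv (fun s => f s x ξ) t + ξ.1 * deriv (fun y => f t y ξ) x
        + E t x * deriv (fun v => f t x (v, ξ.2)) ξ.1
        - ((ξ.1 - u) / (2*θ)) * E t x * f t x ξ = F t x ξ)
    {U : Set (ℝ × (ℝ × ℝ × ℝ))} (hU : IsOpen U)
    (hUb : {p : ℝ × (ℝ × ℝ × ℝ) | p.1 = 0 ∧ 0 ≤ p.2.1} ⊆ U)
    (hfU : ∀ t ∈ Icc 0 T₀, ∀ p ∈ U, f t p.1 p.2 = 0)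
    (hsupp : ∀ t x, ∀ ξ : ℝ × ℝ × ℝ, f t x ξ ≠ 0 → -L₀ ≤ ξ.1 ∧ ξ.1 ≤ R₀)
    {C : ℝ} (hC : C = 3 / 2 * α * R₀ + α / 2 * |u| + α / 2 + 1 / (2 * θ) + 5)
    {T : ℝ} (hT : T ∈ Icc 0 T₀) :
    wH1 α (f T) + ENNReal.ofReal (α / 2) *
        ∫⁻ τ in Ioc 0 T, ENNReal.ofReal (Real.exp (C * (T - τ))) * wDiss α (f τ) ≤
      ENNReal.ofReal (Real.exp (C * T)) * wH1 α (f 0) +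
        ∫⁻ τ in Ioc 0 T, ENNReal.ofReal (Real.exp (C * (T - τ))) * wH1 α (F τ) := by
  have hfc : ContDiff ℝ 1 (weighted α f) := (contDiff_weighted α hf).of_le one_le_two
  have hcf := continuous_energyDensity hfc
  have hcF := continuous_energyDensity (contDiff_weighted α hF)
  have hι : ∀ η, Continuous (sliceEmb η) := fun η => (contDiff_sliceEmb (n := 0) η).continuous
  have hvan : ∀ (η : ℝ × ℝ) (t x v : ℝ), L₀ + R₀ ≤ |v| →
      energyDensity α (f t) x (v, η) = 0 := by
    intro η t x v hv
    obtain ⟨h0, h1⟩ := weighted_eq_zero_of_velocity (α := α) hsupp (z := (t, x, (v, η))) (by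
      rcases le_abs.1 hv with h | h
      · right; change R₀ < v; linarith
      · left; change v < -L₀; linarith)
    rw [energyDensity_eq (hfc.differentiable one_ne_zero), h0, h1]
    simp
  have hcfT : ∀ t, Continuous fun z : ℝ × (ℝ × ℝ × ℝ) => energyDensity α (f t) z.1 z.2 :=
    fun t => hcf.comp (continuous_const.prodMk continuous_id)
  have slice : ∀ (η : ℝ × ℝ) (n : ℕ), _ := fun η =>
    lintegral_le_of_cutoff (W := fun t x v => energyDensity α (f t) x (v, η))
      (K := fun t x v => energyDensity α (F t) x (v, η)) (C := C) (M := L₀ + R₀) (κ := α / 2)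
      hT.1 (by positivity) (by positivity)
      (hcf.comp (hι η)) (hcF.comp (hι η)) (fun _ _ _ => energyDensity_nonneg _ _ _ _)
      (fun _ _ _ => energyDensity_nonneg _ _ _ _) (hvan η)
      fun χ X hX hχ hχ0 hχ' hχX => slice_energy_le hα hθ hR hL hE hEs hF hf heq hU hUb hfU hsupp
        hC rfl hX hχ hχ0 hχ' hχX hT η
  have main := lintegral_le_of_slices (T := T)
    (D := fun x ξ => ENNReal.ofReal (energyDensity α (f T) x ξ))
    (D₀ := fun x ξ => ENNReal.ofReal (Real.exp (C * T) * energyDensity α (f 0) x ξ))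
    (P := fun t x ξ => ENNReal.ofReal
      (Real.exp (C * (T - t)) * (α / 2 * max (-ξ.1) 0 * energyDensity α (f t) x ξ)))
    (K := fun t x ξ => ENNReal.ofReal (Real.exp (C * (T - t)) * energyDensity α (F t) x ξ))
    (ENNReal.continuous_ofReal.comp (by fun_prop)).measurable
    (ENNReal.continuous_ofReal.comp (by fun_prop)).measurable
    (ENNReal.continuous_ofReal.comp (by fun_prop)).measurable
    (ENNReal.continuous_ofReal.comp (by fun_prop)).measurable slice
  simp only [mul_assoc (α / 2)] at main
  simp only [lintegral_lintegral_ofReal_const_mul (Real.exp_pos _).le,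
    lintegral_lintegral_ofReal_const_mul (half_pos hα).le, ← wH1_eq, ← wDiss_eq] at main
  rw [← lintegral_const_mul' _ _ ENNReal.ofReal_ne_top]
  simpa only [mul_left_comm (ENNReal.ofReal (α / 2))] using main

/-- weighted `H¹` energy estimate for the linearized Vlasov equation on
the half-line with completely absorbing boundary condition; `δ₀` depends only on
`α, θ∞`, and `C₀` on `α, θ∞, u∞, R₀` but not on `L₀`. -/
theorem linear_energy_estimate :
    ∀ α θ : ℝ, 0 < α → 0 < θ →
    ∃ δ₀ : ℝ, 0 < δ₀ ∧ δ₀ ≤ 1 ∧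
    ∀ u R₀ : ℝ, 0 < R₀ →
    ∃ C₀ : ℝ, 0 < C₀ ∧
    ∀ L₀ T₀ : ℝ, 0 < L₀ → 0 < T₀ →
    ∀ E : ℝ → ℝ → ℝ, ContDiff ℝ 1 (fun p : ℝ × ℝ => E p.1 p.2) →
    (∀ t ∈ Set.Icc 0 T₀, ∀ x ≥ (0:ℝ), |E t x| + |deriv (E t) x| ≤ δ₀) →
    ∀ F : ℝ → ℝ → ℝ × ℝ × ℝ → ℝ,
      ContDiff ℝ 1 (fun p : ℝ × ℝ × (ℝ × ℝ × ℝ) => F p.1 p.2.1 p.2.2) →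
    ∀ f : ℝ → ℝ → ℝ × ℝ × ℝ → ℝ,
      ContDiff ℝ 2 (fun p : ℝ × ℝ × (ℝ × ℝ × ℝ) => f p.1 p.2.1 p.2.2) →
    (∀ t ∈ Set.Ioo 0 T₀, ∀ x > (0:ℝ), ∀ ξ : ℝ × ℝ × ℝ,
      deriv (fun s => f s x ξ) t + ξ.1 * deriv (fun y => f t y ξ) x
        + E t x * deriv (fun v => f t x (v, ξ.2)) ξ.1
        - ((ξ.1 - u) / (2*θ)) * E t x * f t x ξ
        = F t x ξ) →
    (∃ U : Set (ℝ × (ℝ × ℝ × ℝ)), IsOpen U ∧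
      {p : ℝ × (ℝ × ℝ × ℝ) | p.1 = 0 ∧ 0 ≤ p.2.1} ⊆ U ∧
      ∀ t ∈ Set.Icc 0 T₀, ∀ p ∈ U, f t p.1 p.2 = 0) →
    (∀ t x, ∀ ξ : ℝ × ℝ × ℝ, f t x ξ ≠ 0 → -L₀ ≤ ξ.1 ∧ ξ.1 ≤ R₀) →
    (∀ t ∈ Set.Icc 0 T₀, wH1 α (f t) < ⊤) →
    (∀ t ∈ Set.Icc 0 T₀, wH1 α (F t) < ⊤) →
    (∫⁻ τ in Set.Ioc 0 T₀, wH1 α (F τ)) < ⊤ →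
    ∀ t ∈ Set.Icc 0 T₀,
      wH1 α (f t) + ENNReal.ofReal (α/2) *
          ∫⁻ τ in Set.Ioc 0 t, ENNReal.ofReal (Real.exp (C₀ * (t - τ))) * wDiss α (f τ)
        ≤ ENNReal.ofReal (Real.exp (C₀ * t)) * wH1 α (f 0)
          + ∫⁻ τ in Set.Ioc 0 t, ENNReal.ofReal (Real.exp (C₀ * (t - τ))) * wH1 α (F τ) := by
  intro α θ hα hθ
  refine ⟨min 1 (α * θ / 2), by positivity, min_le_left _ _, fun u R₀ hR => ?_⟩
  refine ⟨3 / 2 * α * R₀ + α / 2 * |u| + α / 2 + 1 / (2 * θ) + 5, by positivity, ?_⟩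
  rintro L₀ T₀ hL hT₀ E hE hEs F hF f hf heq ⟨U, hU, hUb, hfU⟩ hsupp - - - T hT
  exact wH1_add_wDiss_le hα hθ hR hL hE hEs hF hf heq hU hUb hfU hsupp rfl hT
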